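/- arXiv:2604.15909 — 14 statements merged into one kernel-verified Lean document; each statement's English description precedes it below -/
import Mathlib

section
/- If S is a general position set of a digraph D, then the subdigraph of D induced by S is transitive, i.e. for all x, y, z ∈ S, if x → y and y → z are arcs of D then x → z is an arc of D. -/
/-!
If `x → y → z` are arcs between members of `S` and `x → z` is not an arc, then every directed
path from `x` to `z` has length at least two, so `x, y, z` is a geodesic
(`ddist_eq_two_of_not_arc`). It passes through `y ∈ S`, and `y` differs from `x` and `z` because
there are no loops, which contradicts general position.
-/

variable {V : Type*}

/-- `p` is a (nonempty) directed path: distinct vertices joined by consecutive arcs. -/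
def IsDipath (A : V → V → Prop) (p : List V) : Prop :=
  p ≠ [] ∧ p.Nodup ∧ p.Chain' A

/-- `p` is a directed path from `u` to `v`. -/
def IsDipathFrom (A : V → V → Prop) (u v : V) (p : List V) : Prop :=
  IsDipath A p ∧ p.head? = some u ∧ p.getLast? = some v

/-- The directed distance from `u` to `v`, as an extended natural number
(`⊤` if `v` is not reachable from `u`). -/
noncomputable def ddist (A : V → V → Prop) (u v : V) : ℕ∞ :=
  sInf {n : ℕ∞ | ∃ p : List V, IsDipathFrom A u v p ∧ (p.length : ℕ∞) = n + 1}

/-- `p` is a geodesic (shortest directed path) from `u` to `v`. -/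
def IsGeodesic (A : V → V → Prop) (u v : V) (p : List V) : Prop :=
  IsDipathFrom A u v p ∧ (p.length : ℕ∞) = ddist A u v + 1

/-- `S` is in general position: no geodesic between two vertices of `S` passes
through a third vertex of `S`. -/
def InGenPos (A : V → V → Prop) (S : Set V) : Prop :=
  ∀ u ∈ S, ∀ v ∈ S, ∀ p : List V, IsGeodesic A u v p →
    ∀ w ∈ p, w ∈ S → w = u ∨ w = v

/-- The general position number of a digraph on a finite vertex type. -/
noncomputable def gp (V : Type*) [Fintype V] (A : V → V → Prop) : ℕ :=
  sSup {n : ℕ | ∃ S : Set V, InGenPos A S ∧ S.ncard = n}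

theorem ddist_eq_two_of_not_arc {A : V → V → Prop} {x y z : V}
    (hp : IsDipathFrom A x z [x, y, z]) (hxz : x ≠ z) (hA : ¬ A x z) : ddist A x z = 2 := by
  apply le_antisymm
  · exact sInf_le ⟨_, hp, by norm_num⟩
  · refine le_sInf ?_
    rintro n ⟨p, ⟨⟨-, -, hc⟩, hh, hl⟩, hn⟩
    match p with
    | [] => simp at hh
    | [a] =>
      simp at hh hl
      exact absurd (hh.symm.trans hl) hxz
    | [a, b] =>
      replace hc : List.IsChain A [a, b] := hc
      simp at hh hl hc
      subst hh hl
      exact absurd hc hA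
    | a :: b :: c :: t =>
      induction n using ENat.recTopCoe with
      | top => exact le_top
      | coe n =>
        have h : (a :: b :: c :: t).length = n + 1 := by exact_mod_cast hn
        simp only [List.length_cons] at h
        have h2 : 2 ≤ n := by omega
        exact_mod_cast h2

/-- If `S` is a general position set of a digraph, then the subdigraph induced by `S`
is transitive: for `x, y, z ∈ S` (with `x ≠ z`, since loops are forbidden),
arcs `x → y` and `y → z` force the arc `x → z`. -/
theorem induced_transitive_of_inGenPos [Fintype V] (A : V → V → Prop)
    (hloopless : ∀ x, ¬ A x x) (S : Set V) (hS : InGenPos A S) :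
    ∀ x ∈ S, ∀ y ∈ S, ∀ z ∈ S, x ≠ z → A x y → A y z → A x z := by
  intro x hx y hy z hz hxz hxy hyz
  by_contra hA
  have hne₁ : x ≠ y := by
    rintro rfl
    exact hloopless _ hxy
  have hne₂ : y ≠ z := by
    rintro rfl
    exact hloopless _ hyz
  have hp : IsDipathFrom A x z [x, y, z] :=
    ⟨⟨by simp, by simp [hxz, hne₁, hne₂], by change List.IsChain A _; simp [hxy, hyz]⟩,
      by simp, by simp⟩
  have hg : IsGeodesic A x z [x, y, z] :=
    ⟨hp, by rw [ddist_eq_two_of_not_arc hp hxz hA]; norm_num⟩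
  rcases hS x hx z hz _ hg y (by simp) hy with h | h
  · exact hne₁ h.symm
  · exact hne₂ h
end

section
/- For any digraph D of order n ≥ 2, gp(D) = n if and only if D is transitive (i.e. for all vertices x, y, z, if x → y and y → z are arcs then x → z is an arc). -/
/-!
`gp V A = |V|` says exactly that the whole vertex set is in general position
(`gp_eq_card_iff_univ`), i.e. that no geodesic has a vertex besides its two ends.

If `x → y → z` with `x ≠ z` and there is no arc `x → z`, then `x, y, z` is a geodesic, and its
inner vertex `y` shows that `V` is not in general position. Conversely, in a transitive digraph
every path from `u` to `v ≠ u` can be shortcut to a single arc (`eq_or_adj_of_isChain`), so a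
geodesic has at most two vertices. Distances enter only through `isGeodesic_iff`, which describes
geodesics as the paths with fewest vertices.
-/

variable {V : Type*}

/-- A geodesic is a path with the fewest vertices among all paths with the same ends. -/
lemma isGeodesic_iff (A : V → V → Prop) (u v : V) (p : List V) :
    IsGeodesic A u v p ↔
      IsDipathFrom A u v p ∧ ∀ q, IsDipathFrom A u v q → p.length ≤ q.length := by
  have pos : ∀ q, IsDipathFrom A u v q → ∃ k : ℕ, q.length = k + 1 := fun q hq =>
    Nat.exists_eq_succ_of_ne_zero (fun h => hq.1.1 (List.length_eq_zero_iff.1 h))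
  constructor
  · rintro ⟨hp, hl⟩
    refine ⟨hp, fun q hq => ?_⟩
    obtain ⟨k, hk⟩ := pos q hq
    have hle : ddist A u v ≤ (k : ℕ∞) := sInf_le ⟨q, hq, by rw [hk]; push_cast; rfl⟩
    have h : (p.length : ℕ∞) ≤ (q.length : ℕ∞) := by
      rw [hl, hk]; push_cast; gcongr
    exact_mod_cast h
  · rintro ⟨hp, hmin⟩
    refine ⟨hp, ?_⟩
    obtain ⟨k, hk⟩ := pos p hp
    have hd : ddist A u v = (k : ℕ∞) := by
      apply le_antisymm
      · exact sInf_le ⟨p, hp, by rw [hk]; push_cast; rfl⟩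
      · refine le_sInf ?_
        rintro n ⟨q, hq, hn⟩
        obtain ⟨j, hj⟩ := pos q hq
        have h := hmin q hq
        have hjn : (j : ℕ∞) = n := by
          rw [hj] at hn
          push_cast at hn
          exact ENat.add_left_injective_of_ne_top ENat.one_ne_top hn
        rw [← hjn]
        exact_mod_cast (by omega : k ≤ j)
    rw [hd, hk]; push_cast; rfl

lemma gp_eq_card_iff_univ [Fintype V] (A : V → V → Prop) :
    gp V A = Fintype.card V ↔ InGenPos A (Set.univ : Set V) := by
  have hle : ∀ n ∈ {n : ℕ | ∃ S : Set V, InGenPos A S ∧ S.ncard = n}, n ≤ Fintype.card V := by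
    rintro n ⟨S, -, rfl⟩
    simpa [Nat.card_eq_fintype_card] using Set.ncard_le_card S
  constructor
  · intro h
    have hmem : gp V A ∈ {n : ℕ | ∃ S : Set V, InGenPos A S ∧ S.ncard = n} :=
      Nat.sSup_mem ⟨0, ∅, by simp [InGenPos], by simp⟩ ⟨_, hle⟩
    obtain ⟨S, hS, hn⟩ := hmem
    have hu : S = Set.univ := by
      apply Set.eq_of_subset_of_ncard_le (Set.subset_univ S)
      rw [hn, h, Set.ncard_univ, Nat.card_eq_fintype_card]
    exact hu ▸ hS
  · intro h
    refine le_antisymm (csSup_le' hle) (le_csSup ⟨_, hle⟩ ⟨Set.univ, h, ?_⟩)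
    rw [Set.ncard_univ, Nat.card_eq_fintype_card]

/-- In a transitive digraph, a path of positive length can be replaced by an arc between its
ends. -/
lemma eq_or_adj_of_isChain (A : V → V → Prop)
    (ht : ∀ x y z : V, x ≠ z → A x y → A y z → A x z) (v : V) :
    ∀ (l : List V) (u : V), (u :: l).Nodup → (u :: l).IsChain A →
      (u :: l).getLast? = some v → u = v ∨ A u v := by
  intro l
  induction l with
  | nil => intro u _ _ h; left; simpa using h
  | cons w l ih =>
    intro u hnd hc hl
    rw [List.isChain_cons_cons] at hc
    rw [List.getLast?_cons_cons] at hl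
    have huv : u ≠ v := by
      rintro rfl
      exact (List.nodup_cons.1 hnd).1 (List.mem_of_getLast? hl)
    rcases ih w (List.nodup_cons.1 hnd).2 hc.2 hl with rfl | h
    · exact Or.inr hc.1
    · exact Or.inr (ht u w v huv hc.1 h)

/-- For a digraph of order `n ≥ 2`, `gp(D) = n` iff `D` is transitive. -/
theorem gp_eq_card_iff_transitive [Fintype V] (A : V → V → Prop)
    (hloopless : ∀ x, ¬ A x x) (hcard : 2 ≤ Fintype.card V) :
    gp V A = Fintype.card V ↔ ∀ x y z : V, x ≠ z → A x y → A y z → A x z := by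
  rw [gp_eq_card_iff_univ]
  constructor
  · intro h x y z hxz hxy hyz
    by_contra hnot
    have hxy' : x ≠ y := by rintro rfl; exact hloopless _ hxy
    have hyz' : y ≠ z := by rintro rfl; exact hloopless _ hyz
    have hg : IsGeodesic A x z [x, y, z] := by
      rw [isGeodesic_iff]
      refine ⟨⟨⟨by simp, by simp [hxy', hyz', hxz], ?_⟩, by simp, by simp⟩, ?_⟩
      · change List.IsChain A [x, y, z]
        simp [hxy, hyz]
      · rintro q ⟨⟨hne, -, hc⟩, hh, hl⟩
        change List.IsChain A q at hc
        -- A path from `x` to `z` with at most two vertices forces `x = z` or `x → z`.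
        match q, hne, hc, hh, hl with
        | [a], _, _, hh, hl => simp_all
        | [a, b], _, hc, hh, hl => simp_all
        | a :: b :: c :: l, _, _, _, _ => simp
    rcases h x trivial z trivial _ hg y (by simp) trivial with h | h
    · exact hxy' h.symm
    · exact hyz' h
  · intro ht u _ v _ p hp w hw _
    rw [isGeodesic_iff] at hp
    obtain ⟨⟨⟨hne, hnd, hc⟩, hh, hl⟩, hmin⟩ := hp
    change List.IsChain A p at hc
    have huv : u = v ∨ A u v := by
      match p, hh, hnd, hc, hl with
      | a :: l, hh, hnd, hc, hl =>
        obtain rfl : a = u := by simpa using hh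
        exact eq_or_adj_of_isChain A ht v l a hnd hc hl
    have hlen : p.length ≤ 2 := by
      rcases huv with rfl | huv
      · have := hmin [u] ⟨⟨by simp, by simp, List.isChain_singleton u⟩, by simp, by simp⟩
        simp at this
        omega
      · have hne' : u ≠ v := by rintro rfl; exact hloopless _ huv
        exact hmin [u, v] ⟨⟨by simp, by simp [hne'], List.isChain_pair.2 huv⟩, by simp, by simp⟩
    match p, hlen, hh, hl, hw with
    | [a], _, hh, hl, hw => simp_all
    | [a, b], _, hh, hl, hw => simp_all
end

section
/- For any digraph D, the set ext(D) of extreme vertices of D is in general position; in particular gp(D) ≥ |ext(D)|. -/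
/-! An extreme vertex `w` cannot be an internal vertex of a geodesic. The predecessor `x` and the
successor `y` of `w` on the path show that `w` is neither a source nor a sink; if `w` is a
transmitter then `x → y` is an arc, so deleting `w` leaves a shorter directed path with the same
endpoints (`IsGeodesic.not_shortcut`). Hence an extreme vertex on a geodesic is one of its ends. The
bound on `gp` follows because the sizes of general position sets are bounded by `|V|`, so that the
supremum of natural numbers defining `gp` is a genuine one. -/

variable {V : Type*}

/-- A source has no in-neighbours. -/
def IsSource (A : V → V → Prop) (u : V) : Prop := ∀ x, ¬ A x u

/-- A sink has no out-neighbours. -/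
def IsSink (A : V → V → Prop) (u : V) : Prop := ∀ y, ¬ A u y

/-- A transmitter has in- and out-neighbours, and every in-neighbour is adjacent
to every out-neighbour. -/
def IsTransmitter (A : V → V → Prop) (u : V) : Prop :=
  (∃ x, A x u) ∧ (∃ y, A u y) ∧ ∀ x y, A x u → A u y → A x y

/-- An extreme vertex is a source, a sink or a transmitter. -/
def IsExtremeVertex (A : V → V → Prop) (u : V) : Prop :=
  IsSource A u ∨ IsSink A u ∨ IsTransmitter A u

/-- Deleting an internal vertex `w` of a geodesic never leaves a directed path: there is no arc from
the predecessor of `w` to its successor. -/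
theorem IsGeodesic.not_shortcut {A : V → V → Prop} {u v x w y : V} {s t : List V}
    (h : IsGeodesic A u v (s ++ x :: w :: y :: t)) : ¬ A x y := by
  intro hxy
  obtain ⟨⟨⟨-, hnodup, hchain⟩, hhead, hlast⟩, hlen⟩ := h
  have hpath : IsDipathFrom A u v (s ++ x :: y :: t) := by
    refine ⟨⟨by simp, ?_, ?_⟩, ?_, ?_⟩
    · refine hnodup.sublist ?_
      exact (List.Sublist.refl s).append (((List.Sublist.refl _).cons w).cons_cons x)
    · have hc : List.IsChain A (s ++ x :: w :: y :: t) := hchain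
      rw [List.isChain_split] at hc
      show List.IsChain A (s ++ x :: y :: t)
      rw [List.isChain_split]
      simp only [List.isChain_cons_cons] at hc ⊢
      exact ⟨hc.1, hxy, hc.2.2.2⟩
    · cases s <;> simpa using hhead
    · simpa [List.getLast?_append, List.getLast?_cons_cons] using hlast
  have hle : ddist A u v ≤ ((s.length + t.length + 1 : ℕ) : ℕ∞) := by
    refine sInf_le ⟨_, hpath, ?_⟩
    simp only [List.length_append, List.length_cons]
    norm_cast
  have hle' := add_le_add_left hle 1
  rw [← hlen] at hle'
  simp only [List.length_append, List.length_cons] at hle'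
  norm_cast at hle'
  omega

theorem inGenPos_extreme (A : V → V → Prop) : InGenPos A {u | IsExtremeVertex A u} := by
  intro u _ v _ p hp w hwp hw
  obtain ⟨s, t, rfl⟩ := List.append_of_mem hwp
  rcases List.eq_nil_or_concat s with rfl | ⟨s, x, rfl⟩
  · left
    simpa using hp.1.2.1
  rcases t with _ | ⟨y, t⟩
  · right
    simpa using hp.1.2.2
  exfalso
  have hp' : IsGeodesic A u v (s ++ x :: w :: y :: t) := by simpa using hp
  have hc : List.IsChain A (s ++ x :: w :: y :: t) := hp'.1.1.2.2
  rw [List.isChain_split] at hc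
  simp only [List.isChain_cons_cons] at hc
  obtain ⟨-, hxw, hwy, -⟩ := hc
  rcases hw with hsource | hsink | ⟨-, -, htrans⟩
  · exact hsource x hxw
  · exact hsink y hwy
  · exact hp'.not_shortcut (htrans x y hxw hwy)

theorem ncard_le_gp [Fintype V] {A : V → V → Prop} {S : Set V} (hS : InGenPos A S) :
    S.ncard ≤ gp V A := by
  refine le_csSup ⟨Nat.card V, ?_⟩ ⟨S, hS, rfl⟩
  rintro _ ⟨T, -, rfl⟩
  exact Set.ncard_le_card T

/-- The set of extreme vertices of a digraph is in general position;
in particular `gp(D) ≥ |ext(D)|`. -/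
theorem ext_inGenPos [Fintype V] (A : V → V → Prop) (hloopless : ∀ x, ¬ A x x) :
    InGenPos A {u | IsExtremeVertex A u} ∧ {u | IsExtremeVertex A u}.ncard ≤ gp V A := by
  exact ⟨inGenPos_extreme A, ncard_le_gp (inGenPos_extreme A)⟩
end

section
/- For any digraph D, the union of the set of sinks of D and the set of near-sinks of D is in general position, and likewise the union of the set of sources of D and the set of near-sources of D is in general position. -/
/-!
A directed path that starts at a sink or near-sink has length at most one, because any
out-neighbour of its first vertex is a sink. Such a path has no interior vertices, so whether it
is a shortest path is irrelevant. The statement on sources is dual: reversing a path that ends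
at a source or near-source gives a path of the converse digraph that starts at a sink or
near-sink.
-/

variable {V : Type*}

/-- A near-sink is not a sink, but all of its out-neighbours are sinks. -/
def IsNearSink (A : V → V → Prop) (u : V) : Prop :=
  ¬ IsSink A u ∧ ∀ y, A u y → IsSink A y

/-- A near-source is not a source, but all of its in-neighbours are sources. -/
def IsNearSource (A : V → V → Prop) (u : V) : Prop :=
  ¬ IsSource A u ∧ ∀ x, A x u → IsSource A x

/-- If every out-neighbour of `u` is a sink, a directed path from `u` has no interior vertex. -/
theorem eq_or_eq_of_mem_dipath {A : V → V → Prop} {u v w : V} {p : List V}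
    (hu : ∀ y, A u y → IsSink A y) (hp : IsDipathFrom A u v p) (hw : w ∈ p) :
    w = u ∨ w = v := by
  obtain ⟨⟨-, -, hc⟩, hhead, hlast⟩ := hp
  match p, hc with
  | [], _ => simp at hw
  | [a], _ => left; simp_all
  | [a, b], _ => simp_all
  | a :: b :: c :: t, hc =>
    obtain rfl : a = u := by simpa using hhead
    obtain ⟨hab, hbc⟩ := List.isChain_cons_cons.1 hc
    exact absurd (List.isChain_cons_cons.1 hbc).1 (hu b hab c)

/-- A directed path, read backwards, is a directed path of the converse digraph. -/
theorem IsDipathFrom.reverse {A : V → V → Prop} {u v : V} {p : List V}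
    (hp : IsDipathFrom A u v p) : IsDipathFrom (flip A) v u p.reverse := by
  obtain ⟨⟨hne, hnd, hc⟩, hhead, hlast⟩ := hp
  refine ⟨⟨by simpa using hne, List.nodup_reverse.2 hnd, List.isChain_reverse.2 hc⟩, ?_, ?_⟩
  · simpa using hlast
  · simpa using hhead

/-- The sinks together with the near-sinks are in general position, and likewise
the sources together with the near-sources. -/
theorem sinks_nearSinks_inGenPos [Fintype V] (A : V → V → Prop)
    (hloopless : ∀ x, ¬ A x x) :
    InGenPos A ({u | IsSink A u} ∪ {u | IsNearSink A u}) ∧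
    InGenPos A ({u | IsSource A u} ∪ {u | IsNearSource A u}) := by
  constructor
  · rintro u hu v - p ⟨hp, -⟩ w hw -
    refine eq_or_eq_of_mem_dipath (fun y hy => ?_) hp hw
    rcases hu with hu | hu
    · exact absurd hy (hu y)
    · exact hu.2 y hy
  · rintro u - v hv p ⟨hp, -⟩ w hw -
    refine (eq_or_eq_of_mem_dipath (A := flip A) (fun x hx => ?_) hp.reverse
      (List.mem_reverse.2 hw)).symm
    rcases hv with hv | hv
    · exact absurd hx (hv x)
    · exact hv.2 x hx
end

section
/- For any digraph D of order n, gp(D) ≤ n − diam*(D) + 1, where diam*(D) is the length of a longest geodesic (shortest directed path) in D. -/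
/-! Let `p` be a geodesic with `diam* + 1` vertices and let `S` be in general position. If `S` met
`p` in three vertices, in the order `a`, `b`, `c` along `p`, then the section of `p` from `a` to `c`
would be a geodesic through `b` (`IsGeodesic.infix_isGeodesic`), contradicting general position. So
`S` has at most two vertices on `p` (`length_filter_le_two`) and at most `n - (diam* + 1)` off it.

That sections of geodesics are geodesics needs some care because replacing a section by a
shorter path may create repeated vertices; `exists_dipath_of_walk` removes them. -/

variable {V : Type*}

/-- `diam*`: the length of a longest geodesic of the digraph. -/
noncomputable def diamStar (V : Type*) [Fintype V] (A : V → V → Prop) : ℕ :=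
  sSup {l : ℕ | ∃ u v : V, ∃ p : List V, IsGeodesic A u v p ∧ p.length = l + 1}

/-- A directed walk can be shortened to a directed path with the same ends. -/
theorem exists_dipath_of_walk (A : V → V → Prop) (v : V) (l : List V) :
    ∀ u : V, l.IsChain A → l.head? = some u → l.getLast? = some v →
      ∃ p, IsDipathFrom A u v p ∧ p.length ≤ l.length := by
  induction l with
  | nil => intro u _ h; simp at h
  | cons a l ih =>
    intro u hc hu hv
    obtain rfl : a = u := by simpa using hu
    cases l with
    | nil =>
      obtain rfl : a = v := by simpa using hv
      exact ⟨[a], ⟨⟨by simp, by simp, List.isChain_singleton a⟩, by simp, by simp⟩, by simp⟩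
    | cons b l =>
      rw [List.isChain_cons_cons] at hc
      obtain ⟨q, ⟨⟨hq0, hqn, hqc⟩, hqh, hql⟩, hlen⟩ := ih b hc.2 (by simp) (by simpa using hv)
      have hqc : q.IsChain A := hqc
      by_cases ha : a ∈ q
      · -- The shortened tail returns to `a`, so the part of it starting at `a` suffices.
        obtain ⟨s, t, rfl⟩ := List.append_of_mem ha
        refine ⟨a :: t, ⟨⟨by simp, hqn.of_append_right, ?_⟩, by simp, ?_⟩, ?_⟩
        · exact hqc.right_of_append
        · simpa [List.getLast?_append] using hql
        · simp at hlen ⊢; omega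
      · refine ⟨a :: q, ⟨⟨by simp, by simp [ha, hqn], ?_⟩, by simp, ?_⟩, by simpa using hlen⟩
        · refine List.isChain_cons.2 ⟨?_, hqc⟩
          intro y hy
          rw [hqh] at hy
          obtain rfl : b = y := by simpa using hy
          exact hc.1
        · simp [List.getLast?_cons, hql]

theorem IsGeodesic.length_le {A : V → V → Prop} {u v : V} {p q : List V}
    (hp : IsGeodesic A u v p) (hq : IsDipathFrom A u v q) : p.length ≤ q.length := by
  have h0 : 0 < q.length := List.length_pos_iff.2 hq.1.1
  have hq' : (q.length : ℕ∞) = ((q.length - 1 : ℕ) : ℕ∞) + 1 := by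
    exact_mod_cast (by omega : q.length = q.length - 1 + 1)
  have h : ddist A u v ≤ ((q.length - 1 : ℕ) : ℕ∞) := sInf_le ⟨q, hq, hq'⟩
  have h2 : (p.length : ℕ∞) ≤ q.length := by
    rw [hp.2, hq']
    gcongr
  exact_mod_cast h2

theorem isGeodesic_of_minimal {A : V → V → Prop} {u v : V} {p : List V}
    (hp : IsDipathFrom A u v p) (hmin : ∀ q, IsDipathFrom A u v q → p.length ≤ q.length) :
    IsGeodesic A u v p := by
  refine ⟨hp, ?_⟩
  have h0 : 0 < p.length := List.length_pos_iff.2 hp.1.1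
  have hp' : (p.length : ℕ∞) = ((p.length - 1 : ℕ) : ℕ∞) + 1 := by
    exact_mod_cast (by omega : p.length = p.length - 1 + 1)
  have h : ddist A u v = ((p.length - 1 : ℕ) : ℕ∞) := by
    refine le_antisymm ?_ (le_sInf ?_)
    · exact sInf_le ⟨p, hp, hp'⟩
    rintro n ⟨q, hq, hn⟩
    have h1 : (p.length : ℕ∞) ≤ q.length := by exact_mod_cast hmin q hq
    rw [hn, hp'] at h1
    exact (ENat.add_le_add_iff_right (by simp)).1 h1
  rw [h, hp']

/-- A section of a geodesic is a geodesic: a shorter replacement would yield a shorter walk, hence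
a shorter path, between the ends of the whole. -/
theorem IsGeodesic.infix_isGeodesic {A : V → V → Prop} {u v a c : V} {s m t : List V}
    (hp : IsGeodesic A u v (s ++ m ++ t)) (ha : m.head? = some a) (hc : m.getLast? = some c) :
    IsGeodesic A a c m := by
  obtain ⟨⟨⟨-, hn, hch⟩, hh, hl⟩, -⟩ := id hp
  have hch : (s ++ m ++ t).IsChain A := hch
  have hm0 : m ≠ [] := by rintro rfl; simp at ha
  have hch' := List.isChain_append.1 hch
  have hch'' := List.isChain_append.1 hch'.1
  refine isGeodesic_of_minimal
    ⟨⟨hm0, hn.of_append_left.of_append_right, hch''.2.1⟩, ha, hc⟩ ?_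
  rintro q ⟨⟨hq0, hqn, hqc⟩, hqh, hql⟩
  have hqc : q.IsChain A := hqc
  obtain ⟨r, hr, hlen⟩ := exists_dipath_of_walk A v (s ++ q ++ t) u
    (by
      refine List.isChain_append.2 ⟨List.isChain_append.2 ⟨hch''.1, hqc, ?_⟩, hch'.2.1, ?_⟩
      · rw [hqh, ← ha]; exact hch''.2.2
      · have := hch'.2.2
        rw [List.getLast?_append, hc] at this
        rw [List.getLast?_append, hql]
        exact this)
    (by
      rw [List.head?_append, List.head?_append, hqh, ← ha, ← List.head?_append,
        ← List.head?_append, hh])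
    (by
      rw [List.getLast?_append, List.getLast?_append, hql, ← hc, ← List.getLast?_append,
        ← List.getLast?_append, hl])
  have := hp.length_le hr
  simp at this hlen
  omega

open Classical in
/-- A set in general position has at most two vertices on a geodesic. -/
theorem length_filter_le_two {A : V → V → Prop} {S : Set V} (hS : InGenPos A S) {u v : V}
    {p : List V} (hp : IsGeodesic A u v p) : (p.filter (· ∈ S)).length ≤ 2 := by
  by_contra! hlt
  obtain ⟨a, b, c, r, hr⟩ : ∃ a b c r, p.filter (· ∈ S) = a :: b :: c :: r := by
    match h : p.filter (· ∈ S), hlt with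
    | a :: b :: c :: r, _ => exact ⟨a, b, c, r, rfl⟩
  have hmem : ∀ x ∈ [a, b, c], x ∈ S := by
    intro x hx
    have : x ∈ p.filter (· ∈ S) := by rw [hr]; simp at hx ⊢; tauto
    simpa using (List.mem_filter.1 this).2
  have hnd : (a :: b :: c :: r).Nodup := hr ▸ hp.1.1.2.1.filter _
  have hsub : [a, b, c].Sublist p := by
    refine List.Sublist.trans ?_ (List.filter_sublist (p := (· ∈ S)))
    rw [hr]; simp
  obtain ⟨r₁, r₂, rfl, ha, hsub⟩ := List.cons_sublist_iff.1 hsub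
  obtain ⟨r₃, r₄, rfl, hb, hsub⟩ := List.cons_sublist_iff.1 hsub
  have hc : c ∈ r₄ := List.singleton_sublist.1 hsub
  obtain ⟨s, s', rfl⟩ := List.append_of_mem ha
  obtain ⟨t', t, rfl⟩ := List.append_of_mem hc
  have hg : IsGeodesic A a c (a :: (s' ++ r₃ ++ t') ++ [c]) := by
    apply IsGeodesic.infix_isGeodesic (u := u) (v := v) (s := s) (t := t)
    · simpa using hp
    · simp
    · rw [List.getLast?_append]; simp
  have := hS a (hmem a (by simp)) c (hmem c (by simp)) _ hg b (by simp [hb]) (hmem b (by simp))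
  simp at hnd
  grind

theorem ncard_add_length_le [Fintype V] {A : V → V → Prop} {S : Set V} (hS : InGenPos A S)
    {u v : V} {p : List V} (hp : IsGeodesic A u v p) :
    S.ncard + p.length ≤ Fintype.card V + 2 := by
  classical
  have hn := hp.1.1.2.1
  have h1 : (S.toFinset ∩ p.toFinset).card ≤ 2 := by
    refine le_trans (Finset.card_le_card (t := (p.filter (· ∈ S)).toFinset) ?_)
      ((List.toFinset_card_le _).trans (length_filter_le_two hS hp))
    intro x hx
    simp at hx ⊢
    tauto
  have h2 := Finset.card_union_add_card_inter S.toFinset p.toFinset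
  have h3 := Finset.card_le_univ (S.toFinset ∪ p.toFinset)
  rw [List.toFinset_card_of_nodup hn, ← Set.ncard_eq_toFinset_card'] at h2
  omega

/-- `gp(D) ≤ n - diam*(D) + 1`. -/
theorem gp_le_card_sub_diamStar [Fintype V] (A : V → V → Prop)
    (hloopless : ∀ x, ¬ A x x) :
    gp V A ≤ Fintype.card V - diamStar V A + 1 := by
  have hbound : ∀ u v p, IsGeodesic A u v p → p.length ≤ Fintype.card V :=
    fun u v p hp => hp.1.1.2.1.length_le_card
  refine csSup_le' ?_
  rintro _ ⟨S, hS, rfl⟩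
  rcases Set.eq_empty_or_nonempty
      {l : ℕ | ∃ u v : V, ∃ p : List V, IsGeodesic A u v p ∧ p.length = l + 1} with he | hne
  · -- No geodesics at all (the empty digraph): the supremum is `0`.
    have h0 : diamStar V A = 0 := by rw [diamStar, he]; simp
    have := Set.ncard_le_card S
    rw [Nat.card_eq_fintype_card] at this
    omega
  · have hbdd : BddAbove
        {l : ℕ | ∃ u v : V, ∃ p : List V, IsGeodesic A u v p ∧ p.length = l + 1} := by
      refine ⟨Fintype.card V, ?_⟩
      rintro l ⟨u, v, p, hp, hl⟩
      have := hbound u v p hp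
      omega
    obtain ⟨u, v, p, hp, hl⟩ := Nat.sSup_mem hne hbdd
    change p.length = diamStar V A + 1 at hl
    have h1 := ncard_add_length_le hS hp
    have h2 := hbound u v p hp
    omega
end

section
/- If D is a strongly connected oriented graph of order n ≥ 4, then gp(D) ≤ n − 2. -/
/-!
Suppose a set `S` in general position omits at most one vertex `x`. A geodesic between two vertices
`u ≠ v` other than `x` can only have `x` as an inner vertex, so `u → v` or `u → x → v`
(`IsGeodesic.arc_or_through`). Applying this in both directions, and using that no arc is doubled,
exactly one of `u → v`, `v → u` holds; thus the vertices other than `x` form a tournament, and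
`u → v` forces `v → x → u`. So a vertex having both an in-arc and an out-arc in this tournament
would be joined to `x` by a 2-cycle. But every tournament on at least three vertices contains such
a vertex.
-/

variable {V : Type*}

theorem exists_isGeodesic {A : V → V → Prop} {u v : V}
    (h : ∃ p : List V, IsDipathFrom A u v p) : ∃ p : List V, IsGeodesic A u v p := by
  obtain ⟨p, hp⟩ := h
  have hne : {n : ℕ∞ | ∃ p : List V,
      IsDipathFrom A u v p ∧ (p.length : ℕ∞) = n + 1}.Nonempty := by
    refine ⟨((p.length - 1 : ℕ) : ℕ∞), p, hp, ?_⟩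
    have := List.length_pos_iff.2 hp.1.1
    norm_cast
    omega
  obtain ⟨q, hq, hl⟩ := csInf_mem hne
  exact ⟨q, hq, hl⟩

/-- In a general position set containing every vertex except possibly `x`, the inner vertices of a
geodesic between two vertices other than `x` can only be `x`, which occurs at most once; so the
geodesic is `u → v` or `u → x → v`. -/
theorem IsGeodesic.arc_or_through {A : V → V → Prop} {S : Set V} (hS : InGenPos A S) {x : V}
    (hx : ∀ w, w ≠ x → w ∈ S) {u v : V} (hu : u ≠ x) (hv : v ≠ x) (huv : u ≠ v)
    {p : List V} (hp : IsGeodesic A u v p) : A u v ∨ (A u x ∧ A x v) := by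
  have hmem : ∀ w ∈ p, w = u ∨ w = v ∨ w = x := by
    intro w hw
    by_cases hwx : w = x
    · exact Or.inr (Or.inr hwx)
    · rcases hS u (hx u hu) v (hx v hv) p hp w hw (hx w hwx) with h | h
      · exact Or.inl h
      · exact Or.inr (Or.inl h)
  obtain ⟨⟨⟨-, hnd, hch⟩, hhead, hlast⟩, -⟩ := hp
  match p with
  | [] => simp at hhead
  | [a] => simp_all
  | [a, b] =>
    have hab := (List.isChain_cons_cons.1 hch).1
    simp_all
  | a :: b :: c :: r =>
    have hb := hmem b (by simp)
    have hc := hmem c (by simp)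
    simp only [List.head?_cons, Option.some.injEq] at hhead
    subst hhead
    have hab : A a b ∧ A b c := by
      have h1 := List.isChain_cons_cons.1 hch
      exact ⟨h1.1, (List.isChain_cons_cons.1 h1.2).1⟩
    simp only [List.nodup_cons, List.mem_cons, not_or] at hnd
    grind

/-- A strongly connected oriented graph of order at least `4` has `gp(D) ≤ n - 2`. -/
theorem gp_le_card_sub_two_of_strong_oriented [Fintype V] (A : V → V → Prop)
    (hloopless : ∀ x, ¬ A x x) (horiented : ∀ u v, A u v → ¬ A v u)
    (hstrong : ∀ u v : V, ∃ p : List V, IsDipathFrom A u v p)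
    (hcard : 4 ≤ Fintype.card V) :
    gp V A ≤ Fintype.card V - 2 := by
  classical
  refine csSup_le' ?_
  rintro n ⟨S, hS, rfl⟩
  by_contra! hlt
  have hcompl : Sᶜ.ncard ≤ 1 := by
    have h := Set.ncard_add_ncard_compl S
    rw [Nat.card_eq_fintype_card] at h
    omega
  have : Nonempty V := Fintype.card_pos_iff.1 (by omega)
  obtain ⟨x, hsub⟩ := (Set.ncard_le_one_iff_subset_singleton).1 hcompl
  have hx : ∀ w, w ≠ x → w ∈ S := fun w hw => by
    by_contra h
    exact hw (hsub h)
  have key : ∀ u v, u ≠ x → v ≠ x → u ≠ v → A u v ∨ (A u x ∧ A x v) := fun u v hu hv huv =>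
    (exists_isGeodesic (hstrong u v)).elim fun _ hp => hp.arc_or_through hS hx hu hv huv
  have h3 : 2 < (Finset.univ.erase x).card := by
    rw [Finset.card_erase_of_mem (Finset.mem_univ x), Finset.card_univ]
    omega
  obtain ⟨a, b, c, ha, hb, hc, hab, hac, hbc⟩ := Finset.two_lt_card_iff.1 h3
  have ha := Finset.ne_of_mem_erase ha
  have hb := Finset.ne_of_mem_erase hb
  have hc := Finset.ne_of_mem_erase hc
  have := key a b ha hb hab
  have := key b a hb ha hab.symm
  have := key a c ha hc hac
  have := key c a hc ha hac.symm
  have := key b c hb hc hbc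
  have := key c b hc hb hbc.symm
  have := horiented a b
  have := horiented a c
  have := horiented b c
  have := horiented a x
  have := horiented b x
  have := horiented c x
  grind
end

section
/- If D is a digraph with diam*(D) ≤ 3, then gp(D) ≥ α(D), where α(D) is the independence number of D. -/
/-!
Every independent set `S` of a digraph with `diam* ≤ 3` is in general position, which gives the
inequality. Indeed, if a geodesic between `u, v ∈ S` passes through a third vertex `w ∈ S`, then `w`
is adjacent on the geodesic to neither `u` nor `v`, so the parts from `u` to `w` and from `w` to `v`
have length at least two each, and the geodesic has length at least four.
-/

variable {V : Type*}

/-- The independence number of a digraph: the largest cardinality of a set with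
no arcs between its (distinct) members. -/
noncomputable def indepNum (V : Type*) [Fintype V] (A : V → V → Prop) : ℕ :=
  sSup {n : ℕ | ∃ S : Set V, (∀ u ∈ S, ∀ v ∈ S, u ≠ v → ¬ A u v) ∧ S.ncard = n}

theorem bddAbove_ncard [Fintype V] (P : Set V → Prop) :
    BddAbove {n : ℕ | ∃ S : Set V, P S ∧ S.ncard = n} := by
  refine ⟨Fintype.card V, ?_⟩
  rintro n ⟨S, -, rfl⟩
  rw [← Nat.card_eq_fintype_card]
  exact Set.ncard_le_card S

theorem IsGeodesic.length_le_diamStar [Fintype V] {A : V → V → Prop} {u v : V} {p : List V}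
    (hp : IsGeodesic A u v p) : p.length ≤ diamStar V A + 1 := by
  have hbdd : BddAbove {l : ℕ | ∃ u v : V, ∃ p : List V, IsGeodesic A u v p ∧
      p.length = l + 1} := by
    refine ⟨Fintype.card V, ?_⟩
    rintro l ⟨u, v, q, hq, hl⟩
    have := hq.1.1.2.1.length_le_card
    omega
  have hpos : 0 < p.length := List.length_pos_iff.mpr hp.1.1.1
  have h : p.length - 1 ≤ diamStar V A :=
    le_csSup hbdd ⟨u, v, p, hp, by omega⟩
  omega

/-- The part of a path on either side of an interior vertex `w` has at least two further vertices
when `w` is joined to neither endpoint. -/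
theorem IsDipathFrom.five_le_length {A : V → V → Prop} {u v w : V} {p : List V}
    (hp : IsDipathFrom A u v p) (hw : w ∈ p) (hu : w ≠ u) (hv : w ≠ v)
    (huw : ¬ A u w) (hwv : ¬ A w v) : 5 ≤ p.length := by
  obtain ⟨⟨-, -, hc⟩, hh, hl⟩ := hp
  replace hc : p.IsChain A := hc
  obtain ⟨s, t, rfl⟩ := List.append_of_mem hw
  have hs : 2 ≤ s.length := by
    match s with
    | [] => simp_all
    | [a] => simp_all
    | _ :: _ :: _ => simp
  have ht : 2 ≤ t.length := by
    have hc' : (w :: t).IsChain A := hc.right_of_append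
    match t with
    | [] => simp_all
    | [a] => simp_all
    | _ :: _ :: _ => simp
  simp only [List.length_append, List.length_cons]
  omega

theorem inGenPos_of_independent [Fintype V] {A : V → V → Prop} (hdiam : diamStar V A ≤ 3)
    {S : Set V} (hS : ∀ u ∈ S, ∀ v ∈ S, u ≠ v → ¬ A u v) : InGenPos A S := by
  intro u hu v hv p hp w hwp hw
  by_contra! h
  have h5 := hp.1.five_le_length hwp h.1 h.2 (hS u hu w hw h.1.symm) (hS w hw v hv h.2)
  have := hp.length_le_diamStar
  omega

/-- If `diam*(D) ≤ 3` then `gp(D) ≥ α(D)`. -/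
theorem indepNum_le_gp [Fintype V] (A : V → V → Prop)
    (hloopless : ∀ x, ¬ A x x) (hdiam : diamStar V A ≤ 3) :
    indepNum V A ≤ gp V A := by
  refine csSup_le_csSup (bddAbove_ncard _) ⟨0, ∅, by simp, by simp⟩ ?_
  rintro n ⟨S, hS, hn⟩
  exact ⟨S, inGenPos_of_independent hdiam hS, hn⟩
end

section
/- If D' is a convex subdigraph of a digraph D, then gp(D') ≤ gp(D). -/
/-!
Regard a general position set `S` of `D'` as a set of vertices of `D`. By convexity, a geodesic of
`D` between two vertices of `S` is a path of `D'`. Since `D'` is a subdigraph, its distances are at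
least those of `D`, so this path is a geodesic of `D'` as well (`IsGeodesic.of_map_val`) and cannot
meet a third vertex of `S`. Hence `S` is in general position in `D`, which gives `gp(D') ≤ gp(D)`.
-/

variable {V : Type*}

attribute [local instance] Classical.propDecidable

theorem isDipathFrom_map_val_iff (R : V → V → Prop) (V' : Set V) (u v : V') (p : List V') :
    IsDipathFrom R u v (p.map Subtype.val) ↔
      IsDipathFrom (fun x y : V' => R x y) u v p := by
  have hinj : Function.Injective (Subtype.val : V' → V) := Subtype.val_injective
  have hopt (o : Option V') (w : V') : o.map Subtype.val = some w.1 ↔ o = some w :=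
    (Option.map_injective hinj).eq_iff (b := some w)
  simp only [IsDipathFrom, IsDipath, List.Chain', List.isChain_map, List.nodup_map_iff hinj,
    List.head?_map, List.getLast?_map, ne_eq, List.map_eq_nil_iff, hopt]

theorem IsDipathFrom.mono {R T : V → V → Prop} (h : ∀ x y, R x y → T x y) {u v : V} {p : List V}
    (hp : IsDipathFrom R u v p) : IsDipathFrom T u v p :=
  ⟨⟨hp.1.1, hp.1.2.1, hp.1.2.2.imp h⟩, hp.2⟩

/-- A geodesic of `D` all of whose vertices and arcs lie in the subdigraph `D'` is a geodesic
of `D'`. -/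
theorem IsGeodesic.of_map_val {A A' : V → V → Prop} {V' : Set V} (hsub : ∀ x y, A' x y → A x y)
    {u v : V'} {p : List V'} (hp : IsGeodesic A u v (p.map Subtype.val))
    (hc : (p.map Subtype.val).IsChain A') :
    IsGeodesic (fun x y : V' => A' x y) u v p := by
  have hp' : IsDipathFrom (fun x y : V' => A' x y) u v p :=
    (isDipathFrom_map_val_iff A' V' u v p).1 ⟨⟨hp.1.1.1, hp.1.1.2.1, hc⟩, hp.1.2⟩
  have hlen : (p.length : ℕ∞) = ddist A u v + 1 := by simpa using hp.2
  have hd : ddist (fun x y : V' => A' x y) u v = ddist A u v := by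
    apply le_antisymm
    · exact sInf_le ⟨p, hp', hlen⟩
    · refine le_sInf ?_
      rintro n ⟨q, hq, hn⟩
      exact sInf_le ⟨q.map Subtype.val,
        ((isDipathFrom_map_val_iff A' V' u v q).2 hq).mono hsub, by simpa using hn⟩
  exact ⟨hp', hd ▸ hlen⟩

/-- If `D'` (vertex set `V'`, arc relation `A'`) is a convex subdigraph of `D`,
then `gp(D') ≤ gp(D)`. -/
theorem gp_le_of_convex [Fintype V] (A : V → V → Prop) (hloopless : ∀ x, ¬ A x x)
    (V' : Set V) (A' : V → V → Prop)
    (hsub : ∀ u v, A' u v → A u v ∧ u ∈ V' ∧ v ∈ V')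
    (hconvex : ∀ u ∈ V', ∀ v ∈ V', ∀ p : List V, IsGeodesic A u v p →
      (∀ w ∈ p, w ∈ V') ∧ p.Chain' A') :
    gp V' (fun x y : V' => A' x y) ≤ gp V A := by
  have hbdd : BddAbove {n : ℕ | ∃ S : Set V, InGenPos A S ∧ S.ncard = n} := by
    refine ⟨Nat.card V, ?_⟩
    rintro _ ⟨S, -, rfl⟩
    exact Set.ncard_le_card S
  refine csSup_le ⟨0, ∅, fun u hu => hu.elim, Set.ncard_empty _⟩ ?_
  rintro _ ⟨S, hS, rfl⟩
  refine le_csSup hbdd ⟨Subtype.val '' S, ?_, Set.ncard_image_of_injective S Subtype.val_injective⟩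
  rintro _ ⟨u, hu, rfl⟩ _ ⟨v, hv, rfl⟩ p hp _ hwp ⟨w, hw, rfl⟩
  obtain ⟨hmem, hchain⟩ := hconvex u u.2 v v.2 p hp
  lift p to List V' using hmem
  have hwp' : w ∈ p := (List.mem_map_of_injective Subtype.val_injective).1 hwp
  rcases hS u hu v hv p (hp.of_map_val (fun x y h => (hsub x y h).1) hchain) w hwp' hw with h | h
  · exact Or.inl (congrArg Subtype.val h)
  · exact Or.inr (congrArg Subtype.val h)
end

section
/- For any two digraphs D₁ and D₂, the general position number of the join satisfies gp(D₁ ∨ D₂) = gp(D₁) + gp(D₂). -/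
/-! Since every arc between the two parts of `D₁ ∨ D₂` goes from `D₁` to `D₂`, a directed path
ending in `D₁` lies in `D₁` and a directed path starting in `D₂` lies in `D₂`. So the geodesics of
the join between two vertices of the same part are exactly those of that part. From a vertex of
`D₁` to a vertex of `D₂` the only geodesic is the connecting arc, which has no inner vertex, and
from `D₂` to `D₁` there is no path at all. Hence a set is in general position in the join iff both
of its traces are (`inGenPos_joinRel_iff`), and taking maximum cardinalities gives the theorem. -/

variable {V : Type*}

/-- The join of two digraphs: disjoint union plus all arcs from the first
digraph to the second. -/
def joinRel {V₁ V₂ : Type*} (A₁ : V₁ → V₁ → Prop) (A₂ : V₂ → V₂ → Prop) :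
    V₁ ⊕ V₂ → V₁ ⊕ V₂ → Prop
  | Sum.inl u, Sum.inl v => A₁ u v
  | Sum.inl _, Sum.inr _ => True
  | Sum.inr _, Sum.inl _ => False
  | Sum.inr u, Sum.inr v => A₂ u v

section Join

variable {V₁ V₂ : Type*} {A₁ : V₁ → V₁ → Prop} {A₂ : V₂ → V₂ → Prop}

/-- A directed path of the join that ends in the first part stays in the first part. -/
lemma exists_map_inl (p : List (V₁ ⊕ V₂)) (hc : p.IsChain (joinRel A₁ A₂)) (v : V₁)
    (hv : p.getLast? = some (Sum.inl v)) : ∃ q : List V₁, p = q.map Sum.inl := by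
  induction p with
  | nil => exact ⟨[], rfl⟩
  | cons a t ih =>
    cases t with
    | nil =>
      simp only [List.getLast?_singleton, Option.some.injEq] at hv
      exact ⟨[v], by simp [hv]⟩
    | cons b t =>
      rw [List.isChain_cons_cons] at hc
      rw [List.getLast?_cons_cons] at hv
      obtain ⟨q, hq⟩ := ih hc.2 hv
      cases q with
      | nil => simp at hq
      | cons c q =>
        rcases a with a | a
        · exact ⟨a :: c :: q, by rw [hq]; rfl⟩
        · simp only [List.map_cons, List.cons.injEq] at hq
          rw [hq.1] at hc
          exact hc.1.elim

/-- A directed path of the join that starts in the second part stays in the second part. -/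
lemma exists_map_inr (p : List (V₁ ⊕ V₂)) (hc : p.IsChain (joinRel A₁ A₂)) (u : V₂)
    (hu : p.head? = some (Sum.inr u)) : ∃ q : List V₂, p = q.map Sum.inr := by
  induction p generalizing u with
  | nil => exact ⟨[], rfl⟩
  | cons a t ih =>
    simp only [List.head?_cons, Option.some.injEq] at hu
    subst hu
    cases t with
    | nil => exact ⟨[u], rfl⟩
    | cons b t =>
      rw [List.isChain_cons_cons] at hc
      rcases b with b | b
      · exact hc.1.elim
      · obtain ⟨q, hq⟩ := ih hc.2 b rfl
        exact ⟨u :: q, by rw [hq]; rfl⟩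

lemma isDipathFrom_map {W : Type*} {A : V → V → Prop} {B : W → W → Prop} {f : V → W}
    (hf : Function.Injective f) (hAB : ∀ a b, B (f a) (f b) ↔ A a b) (u v : V) (q : List V) :
    IsDipathFrom B (f u) (f v) (q.map f) ↔ IsDipathFrom A u v q := by
  have hs : ∀ (o : Option V) (x : V), o.map f = some (f x) ↔ o = some x := by
    intro o x
    cases o <;> simp [hf.eq_iff]
  have hc : (q.map f).IsChain B ↔ q.IsChain A := by
    rw [List.isChain_map]
    simp only [hAB]
  unfold IsDipathFrom IsDipath
  rw [List.head?_map, List.getLast?_map, hs, hs, List.nodup_map_iff hf]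
  change (_ ∧ _ ∧ (q.map f).IsChain B) ∧ _ ↔ (_ ∧ _ ∧ q.IsChain A) ∧ _
  rw [hc, Ne, List.map_eq_nil_iff]

/-- If `f` embeds `A` in `B` and all `B`-paths between two given image vertices come from
`A`-paths, then so do the geodesics. -/
lemma isGeodesic_iff_exists_map {W : Type*} {A : V → V → Prop} {B : W → W → Prop} {f : V → W}
    (hf : Function.Injective f) (hAB : ∀ a b, B (f a) (f b) ↔ A a b) (u v : V)
    (hp : ∀ p, IsDipathFrom B (f u) (f v) p → ∃ q : List V, p = q.map f) (p : List W) :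
    IsGeodesic B (f u) (f v) p ↔ ∃ q, p = q.map f ∧ IsGeodesic A u v q := by
  simp only [isGeodesic_iff]
  constructor
  · rintro ⟨h, hmin⟩
    obtain ⟨q, rfl⟩ := hp p h
    refine ⟨q, rfl, (isDipathFrom_map hf hAB u v q).1 h, fun r hr => ?_⟩
    simpa using hmin (r.map f) ((isDipathFrom_map hf hAB u v r).2 hr)
  · rintro ⟨q, rfl, h, hmin⟩
    refine ⟨(isDipathFrom_map hf hAB u v q).2 h, fun r hr => ?_⟩
    obtain ⟨r, rfl⟩ := hp r hr
    simpa using hmin r ((isDipathFrom_map hf hAB u v r).1 hr)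

lemma isGeodesic_inl_iff (u v : V₁) (p : List (V₁ ⊕ V₂)) :
    IsGeodesic (joinRel A₁ A₂) (Sum.inl u) (Sum.inl v) p ↔
      ∃ q, p = q.map Sum.inl ∧ IsGeodesic A₁ u v q :=
  isGeodesic_iff_exists_map Sum.inl_injective (fun _ _ => Iff.rfl) u v
    (fun p h => exists_map_inl p h.1.2.2 v h.2.2) p

lemma isGeodesic_inr_iff (u v : V₂) (p : List (V₁ ⊕ V₂)) :
    IsGeodesic (joinRel A₁ A₂) (Sum.inr u) (Sum.inr v) p ↔
      ∃ q, p = q.map Sum.inr ∧ IsGeodesic A₂ u v q :=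
  isGeodesic_iff_exists_map Sum.inr_injective (fun _ _ => Iff.rfl) u v
    (fun p h => exists_map_inr p h.1.2.2 u h.2.1) p

/-- A geodesic from the first to the second part has no inner vertex. -/
lemma mem_geodesic_inl_inr {u : V₁} {v : V₂} {p : List (V₁ ⊕ V₂)}
    (hp : IsGeodesic (joinRel A₁ A₂) (Sum.inl u) (Sum.inr v) p) {w : V₁ ⊕ V₂} (hw : w ∈ p) :
    w = Sum.inl u ∨ w = Sum.inr v := by
  rw [isGeodesic_iff] at hp
  obtain ⟨⟨-, hu, hv⟩, hmin⟩ := hp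
  have harc : IsDipathFrom (joinRel A₁ A₂) (Sum.inl u) (Sum.inr v) [Sum.inl u, Sum.inr v] :=
    ⟨⟨by simp, by simp, List.isChain_pair.2 trivial⟩, rfl, rfl⟩
  have hlen := hmin _ harc
  match p, hu, hv, hlen, hw with
  | [a], hu, hv, _, _ => simp_all
  | [a, b], hu, hv, _, hw => simp_all
  | a :: b :: c :: t, _, _, hlen, _ => simp at hlen

lemma inGenPos_joinRel_iff (S : Set (V₁ ⊕ V₂)) :
    InGenPos (joinRel A₁ A₂) S ↔
      InGenPos A₁ (Sum.inl ⁻¹' S) ∧ InGenPos A₂ (Sum.inr ⁻¹' S) := by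
  constructor
  · refine fun h => ⟨fun u hu v hv q hq w hw hwS => ?_, fun u hu v hv q hq w hw hwS => ?_⟩
    · simpa using h _ hu _ hv _ ((isGeodesic_inl_iff u v _).2 ⟨q, rfl, hq⟩) _
        (List.mem_map_of_mem hw) hwS
    · simpa using h _ hu _ hv _ ((isGeodesic_inr_iff u v _).2 ⟨q, rfl, hq⟩) _
        (List.mem_map_of_mem hw) hwS
  · rintro ⟨hS₁, hS₂⟩ (u | u) hu (v | v) hv p hp w hw hwS
    · obtain ⟨q, rfl, hq⟩ := (isGeodesic_inl_iff u v p).1 hp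
      obtain ⟨x, hx, rfl⟩ := List.mem_map.1 hw
      simpa using hS₁ u hu v hv q hq x hx hwS
    · exact mem_geodesic_inl_inr hp hw
    · obtain ⟨q, rfl⟩ := exists_map_inr p hp.1.1.2.2 u hp.1.2.1
      -- the last vertex of a path lying in the second part cannot be in the first part
      have hv' := hp.1.2.2
      simp [List.getLast?_map] at hv'
    · obtain ⟨q, rfl, hq⟩ := (isGeodesic_inr_iff u v p).1 hp
      obtain ⟨x, hx, rfl⟩ := List.mem_map.1 hw
      simpa using hS₂ u hu v hv q hq x hx hwS

lemma ncard_sum_eq [Finite V₁] [Finite V₂] (S : Set (V₁ ⊕ V₂)) :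
    S.ncard = (Sum.inl ⁻¹' S).ncard + (Sum.inr ⁻¹' S).ncard := by
  rw [← Set.ncard_image_of_injective (Sum.inl ⁻¹' S) (Sum.inl_injective (β := V₂)),
    ← Set.ncard_image_of_injective (Sum.inr ⁻¹' S) (Sum.inr_injective (α := V₁)),
    ← Set.ncard_union_eq ?_ (Set.toFinite _) (Set.toFinite _),
    Set.image_preimage_inl_union_image_preimage_inr]
  rw [Set.disjoint_left]
  rintro _ ⟨a, -, rfl⟩ ⟨b, -, h⟩
  cases h

end Join

/-- On a finite vertex type the supremum defining `gp` is an attained maximum. -/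
lemma isGreatest_gp [Fintype V] (A : V → V → Prop) :
    IsGreatest {n : ℕ | ∃ S : Set V, InGenPos A S ∧ S.ncard = n} (gp V A) := by
  have hb : BddAbove {n : ℕ | ∃ S : Set V, InGenPos A S ∧ S.ncard = n} := by
    refine ⟨Nat.card V, ?_⟩
    rintro n ⟨S, -, rfl⟩
    exact Set.ncard_le_card S
  have hne : {n : ℕ | ∃ S : Set V, InGenPos A S ∧ S.ncard = n}.Nonempty :=
    ⟨0, ∅, fun u hu => hu.elim, Set.ncard_empty V⟩
  exact ⟨Nat.sSup_mem hne hb, fun n hn => le_csSup hb hn⟩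

/-- `gp(D₁ ∨ D₂) = gp(D₁) + gp(D₂)`. -/
theorem gp_join {V₁ V₂ : Type*} [Fintype V₁] [Fintype V₂]
    (A₁ : V₁ → V₁ → Prop) (A₂ : V₂ → V₂ → Prop)
    (h₁ : ∀ x, ¬ A₁ x x) (h₂ : ∀ x, ¬ A₂ x x) :
    gp (V₁ ⊕ V₂) (joinRel A₁ A₂) = gp V₁ A₁ + gp V₂ A₂ := by
  apply le_antisymm
  · obtain ⟨S, hS, hcard⟩ := (isGreatest_gp (joinRel A₁ A₂)).1
    obtain ⟨hS₁, hS₂⟩ := (inGenPos_joinRel_iff S).1 hS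
    rw [← hcard, ncard_sum_eq]
    exact add_le_add ((isGreatest_gp A₁).2 ⟨_, hS₁, rfl⟩) ((isGreatest_gp A₂).2 ⟨_, hS₂, rfl⟩)
  · obtain ⟨S₁, hS₁, hcard₁⟩ := (isGreatest_gp A₁).1
    obtain ⟨S₂, hS₂, hcard₂⟩ := (isGreatest_gp A₂).1
    have hl : Sum.inl ⁻¹' (Sum.inl '' S₁ ∪ Sum.inr '' S₂ : Set (V₁ ⊕ V₂)) = S₁ := by
      ext x
      simp
    have hr : Sum.inr ⁻¹' (Sum.inl '' S₁ ∪ Sum.inr '' S₂ : Set (V₁ ⊕ V₂)) = S₂ := by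
      ext x
      simp
    refine (isGreatest_gp (joinRel A₁ A₂)).2 ⟨Sum.inl '' S₁ ∪ Sum.inr '' S₂, ?_, ?_⟩
    · rw [inGenPos_joinRel_iff, hl, hr]
      exact ⟨hS₁, hS₂⟩
    · rw [ncard_sum_eq, hl, hr, hcard₁, hcard₂]
end

section
/- For any oriented graph D, gp(D) ≤ a⃗(D), where a⃗(D) is the acyclic number of D. -/
/-!
In an oriented graph, every general position set `S` induces an acyclic subdigraph, so it is itself
a competitor for the acyclic number. If `u → v → w` with all three vertices in `S`, then `w ≠ u`
because there are no 2-cycles, and `u → w` must be an arc, since otherwise `u, v, w` would be a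
geodesic through `v`. Hence the arc relation restricted to `S` is transitive; a directed cycle
would then yield a loop or a 2-cycle, and an oriented graph has neither.
-/

variable {V : Type*}

/-- The digraph with arc relation `A` contains a directed cycle. -/
def HasDicycle (A : V → V → Prop) : Prop :=
  ∃ p : List V, ∃ h : p ≠ [], p.Nodup ∧ p.Chain' A ∧ A (p.getLast h) (p.head h)

/-- The acyclic number: the largest cardinality of a vertex set inducing an
acyclic subdigraph. -/
noncomputable def acyclicNum (V : Type*) [Fintype V] (A : V → V → Prop) : ℕ :=
  sSup {n : ℕ | ∃ S : Set V,
    ¬ HasDicycle (fun x y => A x y ∧ x ∈ S ∧ y ∈ S) ∧ S.ncard = n}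

/-- The arc relation is transitive on a general position set: otherwise `u, v, w` would be a
geodesic through `v`. -/
theorem InGenPos.trans_arc {A : V → V → Prop} (hloopless : ∀ x, ¬ A x x)
    (horiented : ∀ u v, A u v → ¬ A v u) {S : Set V} (hS : InGenPos A S) {u v w : V}
    (hu : u ∈ S) (hv : v ∈ S) (hw : w ∈ S) (huv : A u v) (hvw : A v w) : A u w := by
  by_contra huw
  have h1 : u ≠ v := by rintro rfl; exact hloopless _ huv
  have h2 : v ≠ w := by rintro rfl; exact hloopless _ hvw
  have h3 : u ≠ w := by rintro rfl; exact horiented _ _ huv hvw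
  have hp : IsDipathFrom A u w [u, v, w] := by
    refine ⟨⟨by simp, by simp [h1, h2, h3], ?_⟩, rfl, rfl⟩
    simp [List.Chain', huv, hvw]
  have hd : ddist A u w = 2 := by
    refine le_antisymm (sInf_le ⟨_, hp, by norm_num⟩) (le_sInf ?_)
    rintro n ⟨p, ⟨⟨-, -, hc⟩, hh, hl⟩, hn⟩
    -- A path with one vertex forces `u = w`, and one with two vertices is the arc `u → w`.
    match p with
    | [] => simp at hh
    | [a] => simp_all
    | [a, b] =>
      simp only [List.head?_cons, List.getLast?_cons_cons, List.getLast?_singleton,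
        Option.some.injEq] at hh hl
      subst hh hl
      exact absurd (by simpa [List.Chain'] using hc) huw
    | a :: b :: c :: l =>
      induction n using ENat.recTopCoe with
      | top => exact le_top
      | coe n =>
        have : (a :: b :: c :: l).length = n + 1 := by exact_mod_cast hn
        simp only [List.length_cons] at this
        have h : 2 ≤ n := by omega
        exact_mod_cast h
  rcases hS u hu w hw _ ⟨hp, by rw [hd]; norm_num⟩ v (by simp) hv with h | h
  · exact h1 h.symm
  · exact h2 h

theorem InGenPos.not_hasDicycle {A : V → V → Prop} (hloopless : ∀ x, ¬ A x x)
    (horiented : ∀ u v, A u v → ¬ A v u) {S : Set V} (hS : InGenPos A S) :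
    ¬ HasDicycle (fun x y => A x y ∧ x ∈ S ∧ y ∈ S) := by
  rintro ⟨p, hne, -, hc, hlast⟩
  have htr : IsTrans V (fun x y => A x y ∧ x ∈ S ∧ y ∈ S) :=
    ⟨fun _ _ _ h k =>
      ⟨hS.trans_arc hloopless horiented h.2.1 h.2.2 k.2.2 h.1 k.1, h.2.1, k.2.2⟩⟩
  have hpw := List.isChain_iff_pairwise.1 hc
  match p with
  | [] => exact hne rfl
  | [a] => exact hloopless _ hlast.1
  | a :: b :: l =>
    rw [List.getLast_cons (List.cons_ne_nil b l)] at hlast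
    exact horiented _ _ hlast.1
      ((List.pairwise_cons.1 hpw).1 _ (List.getLast_mem (List.cons_ne_nil b l))).1

/-- For any oriented graph, `gp(D) ≤ a⃗(D)`. -/
theorem gp_le_acyclicNum [Fintype V] (A : V → V → Prop)
    (hloopless : ∀ x, ¬ A x x) (horiented : ∀ u v, A u v → ¬ A v u) :
    gp V A ≤ acyclicNum V A := by
  refine csSup_le_csSup ⟨Fintype.card V, ?_⟩ ⟨0, ∅, by simp [InGenPos], by simp⟩ ?_
  · rintro _ ⟨S, -, rfl⟩
    rw [← Nat.card_eq_fintype_card]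
    exact Set.ncard_le_card S
  · rintro _ ⟨S, hS, rfl⟩
    exact ⟨S, hS.not_hasDicycle hloopless horiented, rfl⟩
end

section
/- Let d ≥ 1 and let n = qd + r with q ≥ 0 and 2 ≤ r ≤ d + 1, and suppose d < n. Then r ≤ gp(Circ(n, {1, 2, …, d})) ≤ d + 1; moreover if n ≡ 1 (mod d) then gp(Circ(n, {1, 2, …, d})) = d + 1. -/
/-!
In `Circ(n, {1, …, d})` with `d < n`, every arc advances by at most `d`, so the distance from `x` to
`x + k` with `0 ≤ k < n` is the least `c` with `k ≤ c * d`. It is attained by the greedy path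
`x, x + d, x + 2d, …, x + k` (`greedy_isGeodesic`), while the reverse inequality is
`val_sub_le_of_isChain`.

*Upper bound.* Let `S` be in general position, and represent its elements by residues in `[0, n)`,
with largest residue `M`. If two residues `i < j < M` were congruent modulo `d`, then the greedy path
from `i` to `M` would pass through `j`. Hence the elements of `S` other than the largest one have
distinct residues modulo `d`, and `|S| ≤ d + 1`.

*Lower bound.* The interval `{0, …, r - 1}` is in general position. Its forward distances are at most
`1` since `r ≤ d + 1`, and all other distances between distinct elements equal `q + 1`, because they
correspond to advances between `q * d + 1` and `q * d + d`. A geodesic passing through a third element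
`w` would split into two geodesics, both nontrivial; if the endpoints are in forward order and `w` lies
between them this needs length `2 > 1`, and otherwise one of the parts already has length `q + 1`.

If `n ≡ 1 [MOD d]` then necessarily `r = d + 1`, and the two bounds coincide.
-/


variable {V : Type*}

/-- The arc relation of the circulant digraph `Circ(n, {1, 2, …, d})`. -/
def circA (n d : ℕ) : ZMod n → ZMod n → Prop :=
  fun x y => ∃ c : ℕ, 1 ≤ c ∧ c ≤ d ∧ y = x + (c : ZMod n)

/-- Along a walk with `ℓ` arcs, the total advance is at most `ℓ * d`. -/
lemma exists_advance_of_isChain {n d : ℕ} (p : List (ZMod n)) (x y : ZMod n)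
    (hp : (x :: p).IsChain (circA n d)) (hy : (x :: p).getLast? = some y) :
    ∃ s : ℕ, y = x + (s : ZMod n) ∧ s ≤ p.length * d := by
  induction p generalizing x with
  | nil =>
    refine ⟨0, ?_, by simp⟩
    simpa using hy.symm
  | cons z p ih =>
    rw [List.isChain_cons_cons] at hp
    obtain ⟨⟨c, -, hc, rfl⟩, hp⟩ := hp
    obtain ⟨s, rfl, hs⟩ := ih _ hp (by simpa using hy)
    refine ⟨c + s, by push_cast; ring, ?_⟩
    rw [List.length_cons, Nat.succ_mul]
    omega

lemma val_sub_le_of_isChain {n d : ℕ} [NeZero n] (p : List (ZMod n)) (x y : ZMod n)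
    (hp : (x :: p).IsChain (circA n d)) (hy : (x :: p).getLast? = some y) :
    (y - x).val ≤ p.length * d := by
  obtain ⟨s, rfl, hs⟩ := exists_advance_of_isChain p x y hp hy
  rw [add_sub_cancel_left, ZMod.val_natCast]
  exact (Nat.mod_le _ _).trans hs

/-- The path that advances by `d` from `x` as long as possible and stops at `x + k` after
`c` steps, where `c` is meant to be `⌈k / d⌉`. -/
def greedy (n d : ℕ) (x : ZMod n) (k c : ℕ) : List (ZMod n) :=
  (List.range (c + 1)).map fun t => x + ((min (t * d) k : ℕ) : ZMod n)

lemma greedy_isDipathFrom {n d : ℕ} (x : ZMod n) (k c : ℕ) (hkn : k < n)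
    (hk : k ≤ c * d) (hc : c * d < k + d) :
    IsDipathFrom (circA n d) x (x + (k : ZMod n)) (greedy n d x k c) := by
  have hlt : ∀ t < c, t * d < k := fun t ht => by
    have := Nat.mul_le_mul_right d (Nat.succ_le_of_lt ht)
    rw [Nat.succ_mul] at this
    omega
  have hmono : ∀ s t, s < t → t ≤ c → min (s * d) k < min (t * d) k := fun s t hst ht => by
    have h1 := hlt s (by omega)
    have h2 : s * d < t * d := Nat.mul_lt_mul_of_pos_right hst (by omega)
    omega
  refine ⟨⟨by simp [greedy], ?_, ?_⟩, ?_, ?_⟩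
  · refine List.Nodup.map_on ?_ List.nodup_range
    intro s hs t ht h
    rw [List.mem_range] at hs ht
    have h' := add_left_cancel h
    rw [ZMod.natCast_eq_natCast_iff] at h'
    have h'' := Nat.ModEq.eq_of_lt_of_lt h' (by omega) (by omega)
    rcases lt_trichotomy s t with hst | hst | hst
    · have := hmono s t hst (by omega); omega
    · exact hst
    · have := hmono t s hst (by omega); omega
  · refine List.isChain_iff_getElem.2 fun t ht => ?_
    have ht' : t < c := by simpa [greedy] using ht
    have h1 := hmono t (t + 1) (by omega) (by omega)
    have h2 : (t + 1) * d = t * d + d := Nat.succ_mul t d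
    refine ⟨min ((t + 1) * d) k - min (t * d) k, by omega, by omega, ?_⟩
    simp only [greedy, List.getElem_map, List.getElem_range]
    rw [add_assoc, ← Nat.cast_add, Nat.add_sub_cancel' h1.le]
  · simp [greedy, List.head?_range]
  · simp [greedy, List.getLast?_range, hk]

lemma exists_ceil {d : ℕ} (hd : 1 ≤ d) (k : ℕ) : ∃ c, k ≤ c * d ∧ c * d < k + d := by
  refine ⟨(k + d - 1) / d, ?_, ?_⟩
  · have := Nat.lt_div_mul_add (a := k + d - 1) (b := d) (by omega)
    omega
  · have := Nat.div_mul_le_self (k + d - 1) d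
    omega

lemma ddist_circ {n d : ℕ} [NeZero n] (x : ZMod n) (k c : ℕ) (hkn : k < n)
    (hk : k ≤ c * d) (hc : c * d < k + d) :
    ddist (circA n d) x (x + (k : ZMod n)) = c := by
  apply le_antisymm
  · refine sInf_le ⟨_, greedy_isDipathFrom x k c hkn hk hc, ?_⟩
    simp [greedy]
  · refine le_sInf ?_
    rintro m ⟨p, ⟨⟨-, -, hch⟩, hhd, hlast⟩, hlen⟩
    cases p with
    | nil => simp at hhd
    | cons z p =>
      obtain rfl : z = x := by simpa using hhd
      have hb := val_sub_le_of_isChain p z _ hch hlast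
      rw [add_sub_cancel_left, ZMod.val_natCast, Nat.mod_eq_of_lt hkn] at hb
      have hcp : c ≤ p.length := by
        by_contra! h
        have := Nat.mul_le_mul_right d (Nat.succ_le_of_lt h)
        rw [Nat.succ_mul] at this
        omega
      cases m with
      | top => exact le_top
      | coe m =>
        have hlen' : p.length + 1 = m + 1 := by exact_mod_cast hlen
        have hcm : c ≤ m := by omega
        exact_mod_cast hcm

lemma greedy_isGeodesic {n d : ℕ} [NeZero n] (x : ZMod n) (k c : ℕ) (hkn : k < n)
    (hk : k ≤ c * d) (hc : c * d < k + d) :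
    IsGeodesic (circA n d) x (x + (k : ZMod n)) (greedy n d x k c) :=
  ⟨greedy_isDipathFrom x k c hkn hk hc, by
    rw [ddist_circ x k c hkn hk hc]; simp [greedy]⟩

lemma ncard_le_of_inGenPos {n d : ℕ} [NeZero n] (hd : 1 ≤ d) (S : Set (ZMod n))
    (hS : InGenPos (circA n d) S) : S.ncard ≤ d + 1 := by
  rcases S.eq_empty_or_nonempty with rfl | hne
  · simp
  obtain ⟨m, hm, hmax⟩ := S.exists_max_image ZMod.val S.toFinite hne
  have key : ∀ x ∈ S, ∀ y ∈ S, x.val < y.val → y.val < m.val → x.val % d ≠ y.val % d := by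
    intro x hx y hy hxy hym hmod
    obtain ⟨t, ht⟩ := (Nat.modEq_iff_dvd' hxy.le).1 hmod
    obtain ⟨c, hc1, hc2⟩ := exists_ceil hd (m.val - x.val)
    have hmn := ZMod.val_lt m
    have hcast : ∀ z : ZMod n, x.val ≤ z.val → x + ((z.val - x.val : ℕ) : ZMod n) = z := by
      intro z hz
      rw [Nat.cast_sub hz, ZMod.natCast_zmod_val, ZMod.natCast_zmod_val]
      ring
    have hgeo := greedy_isGeodesic x (m.val - x.val) c (by omega) hc1 hc2
    rw [hcast m (by omega)] at hgeo
    have htc : t < c := by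
      by_contra! h
      have := Nat.mul_le_mul_right d h
      rw [Nat.mul_comm t d] at this
      omega
    have hmem : y ∈ greedy n d x (m.val - x.val) c := by
      refine List.mem_map.2 ⟨t, List.mem_range.2 (by omega), ?_⟩
      have : min (t * d) (m.val - x.val) = y.val - x.val := by
        rw [Nat.mul_comm t d]; omega
      rw [this, hcast y hxy.le]
    rcases hS x hx m hm _ hgeo y hmem hy with rfl | rfl <;> omega
  have hle : (S \ {m}).ncard ≤ (Finset.range d : Set ℕ).ncard := by
    refine Set.ncard_le_ncard_of_injOn (fun x : ZMod n => x.val % d) ?_ ?_ (Finset.finite_toSet _)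
    · intro x _
      simpa using Nat.mod_lt _ hd
    · intro x hx y hy hxy
      have hlt : ∀ z ∈ S \ {m}, z.val < m.val := fun z hz =>
        lt_of_le_of_ne (hmax z hz.1) fun h => hz.2 (ZMod.val_injective n h)
      rcases lt_trichotomy x.val y.val with h | h | h
      · exact absurd hxy (key x hx.1 y hy.1 h (hlt y hy))
      · exact ZMod.val_injective n h
      · exact absurd hxy.symm (key y hy.1 x hx.1 h (hlt x hx))
  rw [Set.ncard_coe_finset, Finset.card_range] at hle
  have := Set.ncard_sdiff_singleton_add_one hm S.toFinite
  omega

lemma val_sub_eq {n : ℕ} [NeZero n] (x y : ZMod n) :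
    (y - x).val = if x.val ≤ y.val then y.val - x.val else n + y.val - x.val := by
  have hx := ZMod.val_lt x
  have hy := ZMod.val_lt y
  split_ifs with h
  · exact ZMod.val_sub h
  · have : y - x = ((n + y.val - x.val : ℕ) : ZMod n) := by
      rw [Nat.cast_sub (by omega), Nat.cast_add, ZMod.natCast_self, ZMod.natCast_zmod_val,
        ZMod.natCast_zmod_val, zero_add]
    rw [this, ZMod.val_natCast, Nat.mod_eq_of_lt (by omega)]

lemma inGenPos_interval {d q r n : ℕ} [NeZero n] (hd : 1 ≤ d) (hrd : r ≤ d + 1)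
    (hn : n = q * d + r) : InGenPos (circA n d) {x : ZMod n | x.val < r} := by
  intro u hu v hv p hp w hwp hw
  simp only [Set.mem_ofPred_eq] at hu hv hw
  obtain ⟨c, hc1, hc2⟩ := exists_ceil hd (v - u).val
  have hdist := ddist_circ u (v - u).val c (ZMod.val_lt _) hc1 hc2
  rw [ZMod.natCast_zmod_val, add_sub_cancel] at hdist
  obtain ⟨⟨⟨-, -, hch⟩, hhd, hlast⟩, hlen⟩ := hp
  rw [hdist] at hlen
  have hlen' : p.length = c + 1 := by exact_mod_cast hlen
  obtain ⟨a, b, rfl⟩ := List.append_of_mem hwp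
  replace hch := List.isChain_split.1 hch
  -- The two halves of the path bound the advances from `u` to `w` and from `w` to `v`.
  have hb := val_sub_le_of_isChain b w v hch.2 (by simpa using hlast)
  have ha : (w - u).val ≤ a.length * d := by
    cases a with
    | nil =>
      obtain rfl : w = u := by simpa using hhd
      simp
    | cons z a =>
      obtain rfl : z = u := by simpa using hhd
      have hl : (z :: (a ++ [w])).getLast? = some w := List.getLast?_concat (l := z :: a)
      simpa [Nat.add_mul] using val_sub_le_of_isChain (a ++ [w]) z w hch.1 hl
  have hab : a.length + b.length = c := by
    simp at hlen'
    omega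
  have hzero : ∀ x y : ZMod n, ∀ l : ℕ, (y - x).val ≤ l * d → l = 0 → y = x := by
    rintro x y l h rfl
    rw [Nat.zero_mul, Nat.le_zero, ZMod.val_eq_zero] at h
    exact sub_eq_zero.1 h
  have hbig : ∀ l : ℕ, q * d < l * d → q + 1 ≤ l := fun l h => Nat.lt_of_mul_lt_mul_right h
  have hsmall : ∀ l : ℕ, c * d < l * d + d → c ≤ l := fun l h => by
    rw [← Nat.succ_mul] at h
    exact Nat.le_of_lt_succ (Nat.lt_of_mul_lt_mul_right h)
  rw [val_sub_eq] at hc1 hc2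
  have ha0 := hzero u w _ ha
  have hb0 := hzero w v _ hb
  rw [val_sub_eq] at ha hb
  have hcq : v.val ≤ u.val ∨ c ≤ 1 := by
    by_contra! h
    have := hsmall 1 (by split_ifs at hc2 <;> omega)
    omega
  have hcq' : c ≤ q + 1 := by
    apply hsmall
    rw [Nat.succ_mul]
    split_ifs at hc2 <;> omega
  by_cases h1 : u.val ≤ w.val
  · by_cases h2 : w.val ≤ v.val
    · have : c ≤ 1 := by
        apply hsmall
        split_ifs at hc2 <;> omega
      rcases Nat.eq_zero_or_pos a.length with h | h
      · exact Or.inl (ha0 h)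
      · exact Or.inr (hb0 (by omega)).symm
    · rw [if_neg h2] at hb
      have := hbig b.length (by omega)
      exact Or.inl (ha0 (by omega))
  · rw [if_neg h1] at ha
    have := hbig a.length (by omega)
    exact Or.inr (hb0 (by omega)).symm

lemma ncard_interval {n r : ℕ} [NeZero n] (hrn : r ≤ n) :
    {x : ZMod n | x.val < r}.ncard = r := by
  have h : ZMod.val '' {x : ZMod n | x.val < r} = (Finset.range r : Set ℕ) := by
    ext t
    simp only [Set.mem_image, Set.mem_ofPred_eq, Finset.coe_range, Set.mem_Iio]
    constructor
    · rintro ⟨x, hx, rfl⟩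
      exact hx
    · intro ht
      have := ZMod.val_cast_of_lt (lt_of_lt_of_le ht hrn)
      exact ⟨t, by rwa [this], this⟩
  rw [← Set.ncard_image_of_injective _ (ZMod.val_injective n), h, Set.ncard_coe_finset,
    Finset.card_range]

/-- For `Circ(n, {1, …, d})` with `n = q·d + r`, `2 ≤ r ≤ d + 1`:
`r ≤ gp ≤ d + 1`, with equality `gp = d + 1` when `n ≡ 1 (mod d)`. -/
theorem gp_circulant_bounds (d q r n : ℕ) (hd : 1 ≤ d)
    (hr : 2 ≤ r) (hrd : r ≤ d + 1) (hn : n = q * d + r) (hdn : d < n) :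
    letI : NeZero n := ⟨by omega⟩
    r ≤ gp (ZMod n) (circA n d) ∧ gp (ZMod n) (circA n d) ≤ d + 1 ∧
      (n ≡ 1 [MOD d] → gp (ZMod n) (circA n d) = d + 1) := by
  have : NeZero n := ⟨by omega⟩
  have hub : ∀ m ∈ {m : ℕ | ∃ S : Set (ZMod n), InGenPos (circA n d) S ∧ S.ncard = m},
      m ≤ d + 1 := by
    rintro m ⟨S, hS, rfl⟩
    exact ncard_le_of_inGenPos hd S hS
  have hlow : r ≤ gp (ZMod n) (circA n d) :=
    le_csSup ⟨d + 1, hub⟩ ⟨_, inGenPos_interval hd hrd hn, ncard_interval (by omega)⟩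
  have hupp : gp (ZMod n) (circA n d) ≤ d + 1 := csSup_le' hub
  refine ⟨hlow, hupp, fun hmod => ?_⟩
  have hdvd : d ∣ r - 1 := by
    refine (Nat.modEq_iff_dvd' (by omega)).1 (Nat.ModEq.symm ?_)
    rw [hn] at hmod
    simpa [Nat.ModEq] using hmod
  have := Nat.le_of_dvd (by omega) hdvd
  omega
end

section
/- For every m ≥ 3, the general position number of the Kautz digraph Ka(m,2) is gp(Ka(m,2)) = ⌊m²/3⌋. -/
/-!
A set `S` of vertices of `Ka(m,2)` is a set of arcs on the `m` letters. The distance between two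
vertices is at most `2`, and the only geodesics with an interior vertex are
`(x,y), (y,z), (z,w)` with `(x,y) ≠ (z,w)`. Hence `S` is in general position iff every directed
walk `x → y → z → w` in `S` satisfies `x = z` and `y = w`.

Upper bound (`card_le_of_walk`): a letter on a 2-cycle of `S` meets no arc outside that 2-cycle, so
the set `D` of such letters carries at most `|D|` arcs. Outside `D` split the letters into those
without in-arcs (`A`), those with both in- and out-arcs (`C`), and the remaining ones (`B`). Every
arc outside `D` goes from `A` to `C`, from `A` to `B`, or from `C` to `B`. With `a + b + c + d = m`
this gives `|S| ≤ ac + ab + cb + d ≤ (m - d)² / 3 + d ≤ m² / 3`, the last step by `m ≥ 3`.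

Lower bound (`exists_layered`): split the letters into three almost equal layers and take all arcs
from a lower layer to a higher one; no walk has three arcs.
-/

variable {V : Type*}

/-- The vertex type of the Kautz digraph `Ka(m,2)`. -/
abbrev KautzVertex (m : ℕ) := {p : Fin m × Fin m // p.1 ≠ p.2}

/-- The arc relation of the Kautz digraph `Ka(m,2)`. -/
abbrev kautzArc (m : ℕ) (u v : KautzVertex m) : Prop := u.1.2 = v.1.1

theorem ddist_le_of_path {A : V → V → Prop} {u v : V} {p : List V} {n : ℕ}
    (h : IsDipathFrom A u v p) (hp : p.length = n + 1) : ddist A u v ≤ n :=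
  sInf_le ⟨p, h, by rw [hp]; push_cast; rfl⟩

theorem kautz_triple_path {m : ℕ} {u x v : KautzVertex m} (h1 : kautzArc m u x)
    (h2 : kautzArc m x v) (huv : u ≠ v) : IsDipathFrom (kautzArc m) u v [u, x, v] := by
  have hux : u ≠ x := by
    rintro rfl
    exact u.2 h1.symm
  have hxv : x ≠ v := by
    rintro rfl
    exact x.2 h2.symm
  refine ⟨⟨by simp, by simp [hux, huv, hxv], ?_⟩, by simp, by simp⟩
  exact List.isChain_cons_cons.2 ⟨h1, List.isChain_cons_cons.2 ⟨h2, List.isChain_singleton _⟩⟩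

/-- The Kautz digraph `Ka(m,2)` has diameter at most `2`. -/
theorem kautz_ddist_le_two {m : ℕ} (u v : KautzVertex m) : ddist (kautzArc m) u v ≤ 2 := by
  by_cases huv : u = v
  · subst huv
    refine (ddist_le_of_path (p := [u]) (n := 0) ⟨⟨by simp, by simp, ?_⟩, by simp, by simp⟩
      rfl).trans (by simp)
    exact List.isChain_singleton _
  by_cases h : u.1.2 = v.1.1
  · refine (ddist_le_of_path (p := [u, v]) (n := 1)
      ⟨⟨by simp, by simp [huv], ?_⟩, by simp, by simp⟩ rfl).trans (by norm_num)
    exact List.isChain_cons_cons.2 ⟨h, List.isChain_singleton _⟩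
  · exact ddist_le_of_path (n := 2)
      (kautz_triple_path (x := ⟨(u.1.2, v.1.1), h⟩) rfl rfl huv) rfl

/-- A path `u → x → v` with `u ≠ v` is a geodesic: a direct arc `u → v` would make the two letters
of `x` equal. -/
theorem kautz_triple_geodesic {m : ℕ} {u x v : KautzVertex m} (h1 : kautzArc m u x)
    (h2 : kautzArc m x v) (huv : u ≠ v) : IsGeodesic (kautzArc m) u v [u, x, v] := by
  refine ⟨kautz_triple_path h1 h2 huv, ?_⟩
  have hd : ddist (kautzArc m) u v = 2 := by
    refine le_antisymm (kautz_ddist_le_two u v) (le_sInf ?_)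
    rintro n ⟨p, ⟨⟨hne, -, hc⟩, hh, hl⟩, hlen⟩
    match p, hne, hc, hh, hl, hlen with
    | [a], _, _, hh, hl, _ =>
      simp only [List.head?_cons, List.getLast?_singleton, Option.some.injEq] at hh hl
      exact absurd (hh.symm.trans hl) huv
    | [a, b], _, hc, hh, hl, _ =>
      have hab : kautzArc m a b := (List.isChain_cons_cons.1 hc).1
      simp only [List.head?_cons, Option.some.injEq] at hh
      have hb : b = v := by simpa using hl
      subst hh hb
      exact absurd (h1.symm.trans (hab.trans h2.symm)) x.2
    | a :: b :: c :: q, _, _, _, _, hlen =>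
      induction n with
      | top => exact le_top
      | coe n =>
        have h3 : (a :: b :: c :: q).length = n + 1 := by exact_mod_cast hlen
        simp only [List.length_cons] at h3
        have : 2 ≤ n := by omega
        exact_mod_cast this
  rw [hd]
  norm_num

/-- In a general position set, every walk of three arcs on the letters runs back and forth along a
single 2-cycle. -/
theorem InGenPos.walk {m : ℕ} {S : Set (KautzVertex m)} (hS : InGenPos (kautzArc m) S)
    {u x v : KautzVertex m} (hu : u ∈ S) (hx : x ∈ S) (hv : v ∈ S)
    (h1 : kautzArc m u x) (h2 : kautzArc m x v) : u = v := by
  by_contra huv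
  rcases hS u hu v hv _ (kautz_triple_geodesic h1 h2 huv) x (by simp) hx with rfl | rfl
  · exact x.2 h1.symm
  · exact x.2 h2.symm

theorem inGenPos_of_no_walk {m : ℕ} {S : Set (KautzVertex m)}
    (hS : ∀ u ∈ S, ∀ x ∈ S, ∀ v ∈ S, kautzArc m u x → ¬ kautzArc m x v) :
    InGenPos (kautzArc m) S := by
  rintro u hu v hv p ⟨⟨⟨hne, -, hc⟩, hh, hl⟩, hlen⟩ w hw hwS
  have hle : p.length ≤ 3 := by
    have h : (p.length : ℕ∞) ≤ 2 + 1 := by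
      rw [hlen]
      gcongr
      exact kautz_ddist_le_two u v
    exact_mod_cast h
  match p, hne, hc, hh, hl, hle, hw with
  | [a], _, _, hh, _, _, hw => simp_all
  | [a, b], _, _, hh, hl, _, hw => simp_all
  | [a, b, c], _, hc, hh, hl, _, hw =>
    have hab : kautzArc m a b := (List.isChain_cons_cons.1 hc).1
    have hbc : kautzArc m b c := (List.isChain_cons_cons.1 (List.isChain_cons_cons.1 hc).2).1
    simp only [List.head?_cons, Option.some.injEq] at hh
    have hcv : c = v := by simpa using hl
    subst hh hcv
    simp only [List.mem_cons, List.not_mem_nil, or_false] at hw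
    rcases hw with h | rfl | h
    · exact Or.inl h
    · exact absurd hbc (hS _ hu _ hwS _ hv hab)
    · exact Or.inr h
  | a :: b :: c :: d :: q, _, _, _, _, hle, _ =>
    simp only [List.length_cons] at hle
    omega

/-- A set of arcs (loops allowed) in which every walk of three arcs runs back and forth along a
single 2-cycle has at most a third of `|α|²` elements, provided `|α| ≥ 3`. -/
theorem card_le_of_walk {α : Type*} [Fintype α] (hα : 3 ≤ Fintype.card α)
    (T : Finset (α × α))
    (hT : ∀ x y z w, (x, y) ∈ T → (y, z) ∈ T → (z, w) ∈ T → x = z ∧ y = w) :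
    T.card ≤ Fintype.card α ^ 2 / 3 := by
  classical
  let D : Finset α := Finset.univ.filter fun x => ∃ y, (x, y) ∈ T ∧ (y, x) ∈ T
  let A : Finset α := Finset.univ.filter fun x => x ∉ D ∧ ∀ w, (w, x) ∉ T
  let B : Finset α := Finset.univ.filter fun x => x ∉ D ∧ (∃ w, (w, x) ∈ T) ∧ ∀ z, (x, z) ∉ T
  let C : Finset α := Finset.univ.filter fun x => x ∉ D ∧ (∃ w, (w, x) ∈ T) ∧ ∃ z, (x, z) ∈ T
  have memD : ∀ x, x ∈ D ↔ ∃ y, (x, y) ∈ T ∧ (y, x) ∈ T := by simp [D]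
  have memA : ∀ x, x ∈ A ↔ x ∉ D ∧ ∀ w, (w, x) ∉ T := fun x => by
    simp only [A, Finset.mem_filter, Finset.mem_univ, true_and]
  have memB : ∀ x, x ∈ B ↔ x ∉ D ∧ (∃ w, (w, x) ∈ T) ∧ ∀ z, (x, z) ∉ T := fun x => by
    simp only [B, Finset.mem_filter, Finset.mem_univ, true_and]
  have memC : ∀ x, x ∈ C ↔ x ∉ D ∧ (∃ w, (w, x) ∈ T) ∧ ∃ z, (x, z) ∈ T := fun x => by
    simp only [C, Finset.mem_filter, Finset.mem_univ, true_and]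
  have hsum : A.card + B.card + C.card + D.card ≤ Fintype.card α := by
    have h1 : Disjoint A B := Finset.disjoint_left.2 fun x hx hy => by
      rw [memA] at hx
      rw [memB] at hy
      obtain ⟨w, hw⟩ := hy.2.1
      exact hx.2 w hw
    have h2 : Disjoint (A ∪ B) C := Finset.disjoint_left.2 fun x hx hy => by
      rw [memC] at hy
      obtain ⟨-, ⟨w, hw⟩, z, hz⟩ := hy
      rcases Finset.mem_union.1 hx with hx | hx
      · exact ((memA x).1 hx).2 w hw
      · exact ((memB x).1 hx).2.2 z hz
    have h3 : Disjoint (A ∪ B ∪ C) D := Finset.disjoint_left.2 fun x hx hy => by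
      simp only [Finset.mem_union] at hx
      rcases hx with (hx | hx) | hx
      · exact ((memA x).1 hx).1 hy
      · exact ((memB x).1 hx).1 hy
      · exact ((memC x).1 hx).1 hy
    rw [← Finset.card_union_of_disjoint h1, ← Finset.card_union_of_disjoint h2,
      ← Finset.card_union_of_disjoint h3]
    exact Finset.card_le_univ _
  have hD : (T.filter fun p => p.1 ∈ D).card ≤ D.card := by
    refine Finset.card_le_card_of_injOn Prod.fst
      (fun p hp => (Finset.mem_filter.1 hp).2) ?_
    rintro ⟨x, y⟩ hp ⟨x', y'⟩ hq (rfl : x = x')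
    obtain ⟨hp, hx⟩ := Finset.mem_filter.1 hp
    obtain ⟨hq, -⟩ := Finset.mem_filter.1 hq
    obtain ⟨t, h1, h2⟩ := (memD _).1 hx
    have e1 := (hT _ _ _ _ h1 h2 hp).2
    have e2 := (hT _ _ _ _ h1 h2 hq).2
    rw [← e1, ← e2]
  have hrest : (T.filter fun p => p.1 ∉ D) ⊆ A ×ˢ C ∪ A ×ˢ B ∪ C ×ˢ B := by
    rintro ⟨x, y⟩ hp
    obtain ⟨hp, hx : x ∉ D⟩ := Finset.mem_filter.1 hp
    have hy : y ∉ D := fun hy => by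
      obtain ⟨t, h1, h2⟩ := (memD _).1 hy
      have e := (hT _ _ _ _ hp h1 h2).1
      subst e
      exact hx ((memD _).2 ⟨y, hp, h1⟩)
    have hnot : (∃ w, (w, x) ∈ T) → ¬ ∃ z, (y, z) ∈ T := by
      rintro ⟨w, hw⟩ ⟨z, hz⟩
      obtain ⟨rfl, rfl⟩ := hT _ _ _ _ hw hp hz
      exact hx ((memD _).2 ⟨_, hp, hw⟩)
    simp only [Finset.mem_union, Finset.mem_product, memA, memB, memC]
    by_cases h1 : ∃ w, (w, x) ∈ T
    · exact Or.inr ⟨⟨hx, h1, y, hp⟩, hy, ⟨x, hp⟩, not_exists.1 (hnot h1)⟩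
    · by_cases h2 : ∃ z, (y, z) ∈ T
      · exact Or.inl (Or.inl ⟨⟨hx, not_exists.1 h1⟩, hy, ⟨x, hp⟩, h2⟩)
      · exact Or.inl (Or.inr ⟨⟨hx, not_exists.1 h1⟩, hy, ⟨x, hp⟩, not_exists.1 h2⟩)
  have hcard : T.card ≤ D.card + (A.card * C.card + A.card * B.card + C.card * B.card) := by
    rw [← Finset.card_filter_add_card_filter_not (s := T) (fun p => p.1 ∈ D)]
    refine add_le_add hD ((Finset.card_le_card hrest).trans ?_)
    refine (Finset.card_union_le _ _).trans ?_
    rw [Finset.card_product C B, ← Finset.card_product A C, ← Finset.card_product A B]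
    gcongr
    exact Finset.card_union_le _ _
  rw [Nat.le_div_iff_mul_le (by norm_num)]
  generalize Fintype.card α = n at *
  generalize A.card = a at *
  generalize B.card = b at *
  generalize C.card = c at *
  generalize D.card = d at *
  have hs : 3 * (a * c + a * b + c * b) ≤ (a + b + c) ^ 2 := by
    zify
    nlinarith [sq_nonneg ((a : ℤ) - b), sq_nonneg ((a : ℤ) - c), sq_nonneg ((b : ℤ) - c)]
  obtain ⟨k, rfl⟩ : ∃ k, n = k + d := ⟨n - d, by omega⟩
  have hk : (a + b + c) ^ 2 ≤ k ^ 2 := Nat.pow_le_pow_left (by omega) 2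
  -- `3 d ≤ d (2 k + d)`, as `2 k + d ≥ k + d ≥ 3`.
  have hd : d * 3 ≤ d * (2 * k + d) := Nat.mul_le_mul_left d (by omega)
  nlinarith

/-- The arcs of a complete tripartite digraph with almost equal layers, oriented upwards;
`f` gives the layer of a letter. -/
theorem exists_layered (m : ℕ) : ∃ (T : Finset (Fin m × Fin m)) (f : Fin m → ℕ),
    T.card = m ^ 2 / 3 ∧ (∀ x, f x < 3) ∧ ∀ x y, (x, y) ∈ T → f x < f y := by
  obtain ⟨a, b, c, ha, habc, hcard⟩ : ∃ a b c : ℕ, a ≤ a + b ∧ a + b + c = m ∧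
      a * b + a * c + b * c = m ^ 2 / 3 := by
    refine ⟨m / 3, (m + 1) / 3, (m + 2) / 3, by omega, by omega, ?_⟩
    obtain ⟨q, h | h | h⟩ : ∃ q, m = 3 * q ∨ m = 3 * q + 1 ∨ m = 3 * q + 2 :=
      ⟨m / 3, by omega⟩
    · have h1 : m / 3 = q := by omega
      have h2 : (m + 1) / 3 = q := by omega
      have h3 : (m + 2) / 3 = q := by omega
      rw [h1, h2, h3, h]
      ring_nf
      omega
    · have h1 : m / 3 = q := by omega
      have h2 : (m + 1) / 3 = q := by omega
      have h3 : (m + 2) / 3 = q + 1 := by omega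
      rw [h1, h2, h3, h]
      ring_nf
      omega
    · have h1 : m / 3 = q := by omega
      have h2 : (m + 1) / 3 = q + 1 := by omega
      have h3 : (m + 2) / 3 = q + 1 := by omega
      rw [h1, h2, h3, h]
      ring_nf
      omega
  let P : Finset (Fin m) := (Finset.Ico 0 a).attachFin fun n hn => by
    rw [Finset.mem_Ico] at hn; omega
  let Q : Finset (Fin m) := (Finset.Ico a (a + b)).attachFin fun n hn => by
    rw [Finset.mem_Ico] at hn; omega
  let R : Finset (Fin m) := (Finset.Ico (a + b) (a + b + c)).attachFin fun n hn => by
    rw [Finset.mem_Ico] at hn; omega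
  have hP : ∀ x, x ∈ P ↔ (x : ℕ) < a := by simp [P]
  have hQ : ∀ x, x ∈ Q ↔ a ≤ (x : ℕ) ∧ (x : ℕ) < a + b := by simp [Q]
  have hR : ∀ x, x ∈ R ↔ a + b ≤ (x : ℕ) ∧ (x : ℕ) < a + b + c := by simp [R]
  refine ⟨P ×ˢ Q ∪ P ×ˢ R ∪ Q ×ˢ R,
    fun x => if (x : ℕ) < a then 0 else if (x : ℕ) < a + b then 1 else 2, ?_, ?_, ?_⟩
  · rw [Finset.card_union_of_disjoint, Finset.card_union_of_disjoint]
    · simp only [Finset.card_product, P, Q, R, Finset.card_attachFin, Nat.card_Ico]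
      rw [← hcard]
      simp
    · refine Finset.disjoint_left.2 ?_
      rintro ⟨x, y⟩ h1 h2
      simp only [Finset.mem_product, hP, hQ, hR] at h1 h2
      omega
    · refine Finset.disjoint_left.2 ?_
      rintro ⟨x, y⟩ h1 h2
      simp only [Finset.mem_union, Finset.mem_product, hP, hQ, hR] at h1 h2
      omega
  · intro x
    dsimp only
    split_ifs <;> omega
  · intro x y h
    simp only [Finset.mem_union, Finset.mem_product, hP, hQ, hR] at h
    dsimp only
    split_ifs <;> omega

/-- The general position number of the Kautz digraph `Ka(m,2)` is `⌊m²/3⌋`.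
Vertices are ordered pairs of distinct letters from an `m`-letter alphabet, with
an arc from `(x,y)` to `(y,z)` for every `z ≠ y`. -/
theorem gp_kautz_two (m : ℕ) (hm : 3 ≤ m) :
    gp {p : Fin m × Fin m // p.1 ≠ p.2}
      (fun u v => u.1.2 = v.1.1) = m ^ 2 / 3 := by
  classical
  refine IsGreatest.csSup_eq ⟨?_, ?_⟩
  · obtain ⟨T, f, hcard, hf, hT⟩ := exists_layered m
    refine ⟨{u | u.1 ∈ T}, inGenPos_of_no_walk (m := m) ?_, ?_⟩
    · rintro ⟨⟨x, y⟩, _⟩ hu ⟨⟨y', z⟩, _⟩ hx ⟨⟨z', w⟩, _⟩ hv (rfl : y = y') (rfl : z = z')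
      have h1 := hT _ _ hu
      have h2 := hT _ _ hx
      have h3 := hT _ _ hv
      have h4 := hf w
      omega
    · rw [← hcard, ← Set.ncard_coe_finset, ← Set.ncard_image_of_injective _ Subtype.val_injective]
      congr 1
      ext ⟨x, y⟩
      constructor
      · rintro ⟨u, hu, hxy⟩
        rw [← hxy]
        exact hu
      · intro h
        have hne : x ≠ y := fun e => by
          have := hT x y h
          rw [e] at this
          exact lt_irrefl _ this
        exact ⟨⟨(x, y), hne⟩, h, rfl⟩
  · rintro n ⟨S, hS, rfl⟩
    have h := card_le_of_walk (α := Fin m) (by simpa using hm)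
      (S.toFinite.toFinset.image Subtype.val) ?_
    · rw [Finset.card_image_of_injective _ Subtype.val_injective,
        ← Set.ncard_eq_toFinset_card, Fintype.card_fin] at h
      exact h
    · intro x y z w h1 h2 h3
      simp only [Finset.mem_image, Set.Finite.mem_toFinset] at h1 h2 h3
      obtain ⟨u, hu, eu⟩ := h1
      obtain ⟨v, hv, ev⟩ := h2
      obtain ⟨t, ht, et⟩ := h3
      have e := InGenPos.walk hS hu hv ht (by simp [kautzArc, eu, ev])
        (by simp [kautzArc, ev, et])
      rw [e, et] at eu
      exact ⟨(Prod.mk.inj eu).1.symm, (Prod.mk.inj eu).2.symm⟩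
end

section
/- If T→ is an out-arborescence (an orientation of a finite tree in which every arc is directed away from a fixed root, so that every vertex is reachable from the root by a directed path), then gp(T→) equals the number of sinks of T→ plus the number of near-sinks of T→. -/
/-!
Counting arcs shows that in an out-arborescence the root has in-degree zero and every vertex has
in-degree at most one (`arborescence_inDegree`). Hence the digraph is acyclic (`not_transGen_self`),
any two vertices with a common descendant are comparable for reachability, and every vertex lying
between `u` and `v` for reachability lies on each directed `u,v`-path (`mem_of_reach_last`).
So a set in general position contains no three vertices forming a reachability chain
(`InGenPos.no_chain`).

*Lower bound.* Sinks together with near-sinks are in general position, since a directed path that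
starts at such a vertex has length at most one.

*Upper bound.* Let `S` be in general position, let `N` be the set of vertices of `S` that properly
reach another vertex of `S`, and let `M = S \ N`. Both are antichains for reachability: `M` by
definition, and `N` because `S` contains no chain of three. Distinct members of an antichain have
disjoint sets of descendants (`ncard_le_of_antichain`). Each vertex of `M` has a sink among its
descendants, and each vertex of `N`, not being a sink, has a near-sink among its descendants. Thus
`M` has at most as many elements as there are sinks, and `N` at most as many as there are near-sinks.
-/

variable {V : Type*}

open Relation

/-- A tree on `n` vertices has `n - 1` arcs, while each of the `n - 1` vertices other than the root
has an in-neighbour, so there is no room for any further arc. -/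
lemma arborescence_inDegree [Fintype V] (A : V → V → Prop)
    (horiented : ∀ u v, A u v → ¬ A v u)
    (r : V) (htree : (SimpleGraph.fromRel A).IsTree) (hreach : ∀ v, ReflTransGen A r v) :
    (∀ a, ¬ A a r) ∧ ∀ a b v, A a v → A b v → a = b := by
  classical
  let E : Finset (V × V) := Finset.univ.filter fun p => A p.1 p.2
  have hE : ∀ a b, (a, b) ∈ E ↔ A a b := by simp [E]
  have hcard : E.card ≤ (SimpleGraph.fromRel A).edgeFinset.card := by
    refine Finset.card_le_card_of_injOn (fun p => s(p.1, p.2)) ?_ ?_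
    · rintro ⟨a, b⟩ h
      have h' : A a b := (hE a b).1 h
      have hne : a ≠ b := by
        rintro rfl
        exact horiented _ _ h' h'
      simp [SimpleGraph.fromRel_adj, hne, h']
    · rintro ⟨a, b⟩ h ⟨c, d⟩ h' heq
      have h1 : A a b := (hE a b).1 h
      have h2 : A c d := (hE c d).1 h'
      rcases Sym2.eq_iff.1 heq with ⟨h3, h4⟩ | ⟨h3, h4⟩
      · exact Prod.ext h3 h4
      · simp only at h3 h4
        subst h3 h4
        exact absurd h2 (horiented _ _ h1)
  have hsub : Finset.univ.erase r ⊆ E.image Prod.snd := by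
    intro v hv
    rcases (hreach v).cases_tail with h | ⟨c, -, h⟩
    · exact absurd h (Finset.ne_of_mem_erase hv)
    · exact Finset.mem_image.2 ⟨(c, v), (hE _ _).2 h, rfl⟩
  have hV : (Finset.univ.erase r).card = (SimpleGraph.fromRel A).edgeFinset.card := by
    have := htree.card_edgeFinset
    rw [Finset.card_erase_of_mem (Finset.mem_univ r), Finset.card_univ]
    omega
  have him : (E.image Prod.snd).card ≤ E.card := Finset.card_image_le
  have heq := Finset.eq_of_subset_of_card_le hsub (by omega)
  have hinj : Set.InjOn Prod.snd (E : Set (V × V)) := by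
    refine Finset.card_image_iff.1 (le_antisymm him ?_)
    rw [← heq]
    omega
  constructor
  · intro a h
    have : r ∈ Finset.univ.erase r := by
      rw [heq]
      exact Finset.mem_image.2 ⟨(a, r), (hE _ _).2 h, rfl⟩
    simp at this
  · intro a b v ha hb
    have := hinj (Finset.mem_coe.2 ((hE a v).2 ha)) (Finset.mem_coe.2 ((hE b v).2 hb)) rfl
    exact congrArg Prod.fst this

/-- With in-degrees at most one, a directed cycle could only be entered at the root, which has no
in-neighbour. -/
lemma not_transGen_self {A : V → V → Prop} {r : V} (hroot : ∀ a, ¬ A a r)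
    (huniq : ∀ a b v, A a v → A b v → a = b) {x : V} (hx : ReflTransGen A r x) :
    ¬ TransGen A x x := by
  induction hx with
  | refl =>
    intro h
    obtain ⟨c, -, h⟩ := TransGen.tail'_iff.1 h
    exact hroot c h
  | @tail b c _ hbc ih =>
    intro h
    obtain ⟨d, hcd, hdc⟩ := TransGen.tail'_iff.1 h
    obtain rfl := huniq _ _ _ hdc hbc
    exact ih (TransGen.head' hbc hcd)

lemma comparable_of_reach {A : V → V → Prop} (huniq : ∀ a b v, A a v → A b v → a = b) {x y z : V}
    (hx : ReflTransGen A x z) (hy : ReflTransGen A y z) :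
    ReflTransGen A x y ∨ ReflTransGen A y x := by
  have := ReflTransGen.total_of_right_unique (r := Function.swap A)
    (fun v a b ha hb => huniq a b v ha hb) (reflTransGen_swap.2 hx) (reflTransGen_swap.2 hy)
  exact this.symm.imp reflTransGen_swap.1 reflTransGen_swap.1

/-- Tracing unique in-neighbours backwards from the last vertex of a path, one follows the path
until its first vertex. -/
lemma mem_of_reach_last {A : V → V → Prop} (huniq : ∀ a b v, A a v → A b v → a = b) {v w : V}
    (hw : ReflTransGen A w v) (p : List V) :
    ∀ u, p.IsChain A → p.head? = some u → p.getLast? = some v → w ∈ p ∨ ReflTransGen A w u := by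
  induction p with
  | nil => simp
  | cons a l ih =>
    intro u hc hh hl
    obtain rfl : a = u := by simpa using hh
    cases l with
    | nil =>
      obtain rfl : a = v := by simpa using hl
      exact Or.inr hw
    | cons b l =>
      rw [List.isChain_cons_cons] at hc
      rcases ih b hc.2 rfl (by simpa using hl) with h | h
      · exact Or.inl (List.mem_cons_of_mem _ h)
      · rcases h.cases_tail with h | ⟨c, hwc, hcb⟩
        · subst h
          simp
        · obtain rfl := huniq _ _ _ hcb hc.1
          exact Or.inr hwc

lemma exists_geodesic {A : V → V → Prop} (hacyc : ∀ x, ¬ TransGen A x x) {u v : V}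
    (h : ReflTransGen A u v) : ∃ p, IsGeodesic A u v p := by
  have hne : {n : ℕ∞ | ∃ p : List V, IsDipathFrom A u v p ∧ (p.length : ℕ∞) = n + 1}.Nonempty := by
    obtain ⟨l, hc, hl⟩ := List.exists_isChain_cons_of_relationReflTransGen h
    refine ⟨l.length, u :: l, ⟨⟨by simp, ?_, hc⟩, rfl, ?_⟩, by simp⟩
    · have : (u :: l).IsChain (TransGen A) := hc.imp fun _ _ h => TransGen.single h
      refine this.pairwise.imp ?_
      rintro a _ hab rfl
      exact hacyc a hab
    · rw [List.getLast?_eq_getLast_of_ne_nil (by simp), hl]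
  obtain ⟨p, hp, hlen⟩ := csInf_mem hne
  exact ⟨p, hp, hlen⟩

lemma InGenPos.no_chain {A : V → V → Prop} (huniq : ∀ a b v, A a v → A b v → a = b)
    (hacyc : ∀ x, ¬ TransGen A x x) {S : Set V} (hS : InGenPos A S) {u w v : V}
    (hu : u ∈ S) (hw : w ∈ S) (hv : v ∈ S) (huw : TransGen A u w) (hwv : TransGen A w v) :
    False := by
  obtain ⟨p, hp⟩ := exists_geodesic hacyc (huw.trans hwv).to_reflTransGen
  rcases mem_of_reach_last huniq hwv.to_reflTransGen p u hp.1.1.2.2 hp.1.2.1 hp.1.2.2 with h | h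
  · rcases hS u hu v hv p hp w h hw with rfl | rfl
    · exact hacyc _ huw
    · exact hacyc _ hwv
  · exact hacyc _ (huw.trans_left h)

/-- Distinct members of a reachability antichain have no common descendant, so choosing for each
member a descendant in `Q` is injective. -/
lemma ncard_le_of_antichain [Finite V] {A : V → V → Prop}
    (huniq : ∀ a b v, A a v → A b v → a = b) {X Q : Set V}
    (hX : ∀ x ∈ X, ∀ y ∈ X, ¬ TransGen A x y) (hQ : ∀ x ∈ X, ∃ s ∈ Q, ReflTransGen A x s) :
    X.ncard ≤ Q.ncard := by
  choose! f hf hxf using hQ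
  refine Set.ncard_le_ncard_of_injOn f hf ?_ (Set.toFinite Q)
  intro x hx y hy hxy
  rcases comparable_of_reach huniq (hxf x hx) (hxy ▸ hxf y hy) with h | h
  · rcases reflTransGen_iff_eq_or_transGen.1 h with h | h
    · exact h.symm
    · exact absurd h (hX x hx y hy)
  · rcases reflTransGen_iff_eq_or_transGen.1 h with h | h
    · exact h
    · exact absurd h (hX y hy x hx)

/-- In a finite acyclic digraph, a vertex with property `P` has a last descendant with `P`. -/
lemma exists_last_reach [Finite V] {A : V → V → Prop} (hacyc : ∀ x, ¬ TransGen A x x)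
    (P : V → Prop) {x : V} (hx : P x) :
    ∃ s, ReflTransGen A x s ∧ P s ∧ ∀ y, A s y → ¬ P y := by
  have : IsTrans V (Function.swap (TransGen A)) := ⟨fun _ _ _ h h' => h'.trans h⟩
  have : Std.Irrefl (Function.swap (TransGen A)) := ⟨fun x => hacyc x⟩
  have hwf : WellFounded (Function.swap (TransGen A)) := Finite.wellFounded_of_trans_of_irrefl _
  obtain ⟨s, ⟨hxs, hs⟩, hmin⟩ :=
    hwf.has_min {s | ReflTransGen A x s ∧ P s} ⟨x, ReflTransGen.refl, hx⟩
  exact ⟨s, hxs, hs, fun y hy hP => hmin y ⟨hxs.tail hy, hP⟩ (TransGen.single hy)⟩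

lemma inGenPos_sinks_union_nearSinks (A : V → V → Prop) :
    InGenPos A ({u | IsSink A u} ∪ {u | IsNearSink A u}) := by
  intro u hu v _ p hp w hw _
  obtain ⟨⟨⟨_, _, hc⟩, hh, hl⟩, _⟩ := hp
  change p.IsChain A at hc
  -- A path of at least two arcs would start at a near-sink and then leave a sink.
  match p, hc, hh, hl, hw with
  | [a], _, hh, _, hw =>
    simp at hh hw
    exact Or.inl (hw.trans hh)
  | [a, b], _, hh, hl, hw =>
    simp at hh hl hw
    subst hh hl
    exact hw
  | a :: b :: c :: l, hc, hh, _, _ =>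
    simp at hh
    subst hh
    simp only [List.isChain_cons_cons] at hc
    rcases hu with hu | hu
    · exact absurd hc.1 (hu b)
    · exact absurd hc.2.1 (hu.2 b hc.1 c)

/-- If `T` is an out-arborescence (an orientation of a tree in which every vertex
is reachable from the root `r` by a directed path), then `gp(T)` equals the
number of sinks plus the number of near-sinks. -/
theorem gp_out_arborescence [Fintype V] (A : V → V → Prop)
    (hloopless : ∀ x, ¬ A x x) (horiented : ∀ u v, A u v → ¬ A v u)
    (r : V) (htree : (SimpleGraph.fromRel A).IsTree)
    (hreach : ∀ v : V, ∃ p : List V, IsDipathFrom A r v p) :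
    gp V A = {u | IsSink A u}.ncard + {u | IsNearSink A u}.ncard := by
  have hr : ∀ v, ReflTransGen A r v := by
    intro v
    obtain ⟨p, ⟨_, _, hc⟩, hh, hl⟩ := hreach v
    change p.IsChain A at hc
    cases p with
    | nil => simp at hh
    | cons a l =>
      obtain rfl : a = r := by simpa using hh
      refine List.relationReflTransGen_of_exists_isChain_cons l hc ?_
      rw [List.getLast?_eq_getLast_of_ne_nil (by simp)] at hl
      exact Option.some.inj hl
  obtain ⟨hroot, huniq⟩ := arborescence_inDegree A horiented r htree hr
  have hacyc : ∀ x, ¬ TransGen A x x := fun x => not_transGen_self hroot huniq (hr x)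
  have hupper : ∀ n ∈ {n : ℕ | ∃ S : Set V, InGenPos A S ∧ S.ncard = n},
      n ≤ {u | IsSink A u}.ncard + {u | IsNearSink A u}.ncard := by
    rintro _ ⟨S, hS, rfl⟩
    let M : Set V := {x | x ∈ S ∧ ∀ y ∈ S, ¬ TransGen A x y}
    let N : Set V := {x | x ∈ S ∧ ∃ y ∈ S, TransGen A x y}
    have hSMN : S ⊆ M ∪ N := by
      intro x hx
      by_cases h : ∃ y ∈ S, TransGen A x y
      · exact Or.inr ⟨hx, h⟩
      · push Not at h
        exact Or.inl ⟨hx, h⟩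
    have hM : M.ncard ≤ {u | IsSink A u}.ncard := by
      refine ncard_le_of_antichain huniq (fun x hx y hy => hx.2 y hy.1) ?_
      intro x _
      obtain ⟨s, hxs, -, hs⟩ := exists_last_reach hacyc (fun _ => True) (x := x) trivial
      exact ⟨s, fun y hy => hs y hy trivial, hxs⟩
    have hN : N.ncard ≤ {u | IsNearSink A u}.ncard := by
      refine ncard_le_of_antichain huniq ?_ ?_
      · rintro x ⟨hx, -⟩ y ⟨hy, z, hz, hyz⟩ hxy
        exact hS.no_chain huniq hacyc hx hy hz hxy hyz
      · rintro x ⟨-, y, -, hxy⟩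
        have hx : ¬ IsSink A x := by
          obtain ⟨c, hxc, -⟩ := TransGen.head'_iff.1 hxy
          exact fun h => h c hxc
        obtain ⟨s, hxs, hs, hs'⟩ := exists_last_reach hacyc (fun x => ¬ IsSink A x) hx
        exact ⟨s, ⟨hs, fun y hy => not_not.1 (hs' y hy)⟩, hxs⟩
    calc S.ncard ≤ (M ∪ N).ncard := Set.ncard_le_ncard hSMN (Set.toFinite _)
      _ ≤ M.ncard + N.ncard := Set.ncard_union_le M N
      _ ≤ _ := add_le_add hM hN
  have hdisj : Disjoint {u | IsSink A u} {u | IsNearSink A u} :=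
    Set.disjoint_left.2 fun _ h h' => h'.1 h
  have hmem : {u | IsSink A u}.ncard + {u | IsNearSink A u}.ncard ∈
      {n : ℕ | ∃ S : Set V, InGenPos A S ∧ S.ncard = n} :=
    ⟨_, inGenPos_sinks_union_nearSinks A,
      Set.ncard_union_eq hdisj (Set.toFinite _) (Set.toFinite _)⟩
  exact le_antisymm (csSup_le ⟨_, hmem⟩ hupper) (le_csSup ⟨_, hupper⟩ hmem)
end

section
/- For any finite undirected graph G, the upper oriented general position number ugp(G) (the maximum of gp(G→) over all orientations G→ of G) equals the maximum number of vertices of an induced subgraph H of G that is a comparability graph (i.e. admits a transitive orientation). -/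
variable {V : Type*}

/-- `A` is an orientation of the undirected graph `G`: every arc comes from an
edge of `G`, and every edge of `G` receives exactly one of its two directions. -/
def IsOrientation {W : Type*} (G : SimpleGraph W) (A : W → W → Prop) : Prop :=
  (∀ u v, A u v → G.Adj u v) ∧ ∀ u v, G.Adj u v → (A u v ↔ ¬ A v u)

/-- The upper oriented general position number: the maximum of `gp` over all
orientations of `G`. -/
noncomputable def ugp (V : Type*) [Fintype V] (G : SimpleGraph V) : ℕ :=
  sSup {n : ℕ | ∃ A : V → V → Prop, IsOrientation G A ∧ gp V A = n}

/-!
Two constructions give the two inequalities.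

If `S` is in general position in an orientation of `G`, the orientation is transitive on `S`: arcs
`x → y → z` inside `S` without the arc `x → z` would make `x, y, z` a geodesic through a third
vertex of `S` (`InGenPos.trans_on`). So `S` induces a comparability graph.

Conversely, given a transitive orientation of `G.induce W`, direct all remaining edges at `W` out
of `W` and orient the other edges acyclically (`extendOut`). A directed path ending in `W` then never
leaves `W`, so by transitivity its first vertex dominates its last one. Geodesics between vertices
of `W` therefore have at most two vertices, and `W` is in general position.
-/

theorem ddist_le_of_dipath {A : V → V → Prop} {u v : V} {p : List V} {n : ℕ}
    (hp : IsDipathFrom A u v p) (hn : p.length = n + 1) : ddist A u v ≤ n :=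
  sInf_le ⟨p, hp, by rw [hn]; push_cast; rfl⟩

theorem isGeodesic_of_not_arc {A : V → V → Prop} {x y z : V} (hxy : A x y) (hyz : A y z)
    (hxz : ¬ A x z) (h1 : x ≠ y) (h2 : y ≠ z) (h3 : x ≠ z) : IsGeodesic A x z [x, y, z] := by
  have hp : IsDipathFrom A x z [x, y, z] :=
    ⟨⟨by simp, by simp [h1, h2, h3], by simp [List.Chain', hxy, hyz]⟩, by simp, by simp⟩
  have hd : ddist A x z = 2 := by
    apply le_antisymm
    · exact ddist_le_of_dipath (n := 2) hp rfl
    · apply le_sInf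
      rintro n ⟨p, ⟨⟨-, -, hc⟩, hh, hl⟩, hn⟩
      match p, hc, hh, hl, hn with
      | [], _, hh, _, _ => simp at hh
      | [a], _, hh, hl, _ => simp at hh hl; exact absurd (hh.symm.trans hl) h3
      | [a, b], hc, hh, hl, _ =>
        simp [List.Chain'] at hc hh hl
        subst hh hl
        exact absurd hc hxz
      | a :: b :: c :: l, _, _, _, hn =>
        induction n using ENat.recTopCoe with
        | top => exact le_top
        | coe n =>
          norm_cast at hn ⊢
          simp at hn
          omega
  refine ⟨hp, ?_⟩
  rw [hd]
  rfl

theorem IsOrientation.ne {G : SimpleGraph V} {A : V → V → Prop} (hA : IsOrientation G A)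
    {u v : V} (h : A u v) : u ≠ v := (hA.1 u v h).ne

/-- An orientation is transitive on any set in general position. -/
theorem InGenPos.trans_on {G : SimpleGraph V} {A : V → V → Prop} (hA : IsOrientation G A)
    {S : Set V} (hS : InGenPos A S) {x y z : V} (hx : x ∈ S) (hy : y ∈ S) (hz : z ∈ S)
    (hxy : A x y) (hyz : A y z) : A x z := by
  by_contra hxz
  have h3 : x ≠ z := by
    rintro rfl
    exact (hA.2 _ _ (hA.1 _ _ hxy)).1 hxy hyz
  have := hS x hx z hz _ (isGeodesic_of_not_arc hxy hyz hxz (hA.ne hxy) (hA.ne hyz) h3) y (by simp) hy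
  rcases this with h | h
  · exact hA.ne hxy h.symm
  · exact hA.ne hyz h

/-- Extension of an orientation `A` of `G.induce W` to `G`: edges between `W` and its complement
point out of `W`, and edges outside `W` follow the order of the labels `e`. -/
def extendOut (G : SimpleGraph V) (W : Set V) (A : W → W → Prop) (e : V → ℕ) (u v : V) : Prop :=
  (∃ (hu : u ∈ W) (hv : v ∈ W), A ⟨u, hu⟩ ⟨v, hv⟩) ∨
  (u ∈ W ∧ v ∉ W ∧ G.Adj u v) ∨ (u ∉ W ∧ v ∉ W ∧ G.Adj u v ∧ e u < e v)

section Extend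

variable {G : SimpleGraph V} {W : Set V} {A : W → W → Prop} {e : V → ℕ}

theorem extendOut_isOrientation (hA : IsOrientation (G.induce W) A) (he : Function.Injective e) :
    IsOrientation G (extendOut G W A e) := by
  constructor
  · rintro u v (⟨hu, hv, h⟩ | ⟨-, -, h⟩ | ⟨-, -, h, -⟩)
    · exact hA.1 _ _ h
    · exact h
    · exact h
  · intro u v h
    have h' := h.symm
    by_cases hu : u ∈ W <;> by_cases hv : v ∈ W
    · simpa [extendOut, hu, hv] using hA.2 ⟨u, hu⟩ ⟨v, hv⟩ h
    · simp [extendOut, hu, hv, h]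
    · simp [extendOut, hu, hv, h']
    · have : e u ≠ e v := fun hh => h.ne (he hh)
      simp [extendOut, hu, hv, h, h']
      omega

/-- A directed path with at least two vertices that ends in `W` starts in `W`, and its first
vertex dominates its last one. -/
theorem extendOut_of_chain (hT : Transitive A) {v : V} (hv : v ∈ W) :
    ∀ (l : List V) (u x : V), (u :: x :: l).IsChain (extendOut G W A e) →
      (x :: l).getLast? = some v → ∃ hu : u ∈ W, A ⟨u, hu⟩ ⟨v, hv⟩ := by
  intro l
  induction l with
  | nil =>
    intro u x hc hl
    simp at hc hl
    subst hl
    rcases hc with ⟨hu, _, h⟩ | ⟨_, h, _⟩ | ⟨_, h, _⟩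
    · exact ⟨hu, h⟩
    · exact absurd hv h
    · exact absurd hv h
  | cons y l ih =>
    intro u x hc hl
    rw [List.isChain_cons_cons] at hc
    obtain ⟨hx, hxv⟩ := ih x y hc.2 (by simpa using hl)
    rcases hc.1 with ⟨hu, _, h⟩ | ⟨_, h, _⟩ | ⟨_, h, _⟩
    · exact ⟨hu, hT h hxv⟩
    · exact absurd hx h
    · exact absurd hx h

theorem extendOut_inGenPos (hT : Transitive A) : InGenPos (extendOut G W A e) W := by
  rintro u hu v hv p ⟨⟨⟨-, hnd, hc⟩, hh, hl⟩, hlen⟩ w hw -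
  match p, hnd, hc, hh, hl, hlen, hw with
  | [], _, _, hh, _, _, _ => simp at hh
  | [a], _, _, hh, _, _, hw =>
    simp at hh hw
    exact Or.inl (hw.trans hh)
  | [a, b], _, _, hh, hl, _, hw =>
    simp at hh hl hw
    subst hh hl
    exact hw
  | a :: b :: c :: l, hnd, hc, hh, hl, hlen, _ =>
    exfalso
    simp only [List.head?_cons, Option.some.injEq] at hh
    subst hh
    rw [List.getLast?_cons_cons] at hl
    obtain ⟨ha, hav⟩ := extendOut_of_chain hT hv (c :: l) a b hc hl
    have hne : a ≠ v := by
      rintro rfl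
      exact (List.nodup_cons.1 hnd).1 (List.mem_of_getLast? hl)
    have hle : ddist (extendOut G W A e) a v ≤ (1 : ℕ) :=
      ddist_le_of_dipath (p := [a, v])
        ⟨⟨by simp, by simp [hne], List.isChain_pair.2 (Or.inl ⟨ha, hv, hav⟩)⟩,
          by simp, by simp⟩ rfl
    have h2 : ((a :: b :: c :: l).length : ℕ∞) ≤ (1 : ℕ) + 1 := by
      rw [hlen]
      gcongr
    norm_cast at h2

end Extend

theorem gp_le_card [Fintype V] (A : V → V → Prop) : gp V A ≤ Fintype.card V := by
  refine csSup_le' ?_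
  rintro n ⟨T, -, rfl⟩
  exact Nat.card_eq_fintype_card (α := V) ▸ Set.ncard_le_card T

/-- `ugp(G)` equals the largest number of vertices of an induced subgraph of `G`
that is a comparability graph (i.e. admits a transitive orientation). -/
theorem ugp_eq_max_induced_comparability [Fintype V] (G : SimpleGraph V) :
    ugp V G = sSup {n : ℕ | ∃ W : Set V,
      (∃ A : W → W → Prop, IsOrientation (G.induce W) A ∧ Transitive A) ∧
      W.ncard = n} := by
  apply le_antisymm
  · refine csSup_le' ?_
    rintro n ⟨A, hA, rfl⟩
    refine csSup_le' ?_
    rintro n ⟨S, hS, rfl⟩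
    refine le_csSup ⟨Fintype.card V, ?_⟩ ⟨S, ⟨fun x y => A x y, ⟨?_, ?_⟩, ?_⟩, rfl⟩
    · rintro n ⟨T, -, rfl⟩
      exact Nat.card_eq_fintype_card (α := V) ▸ Set.ncard_le_card T
    · exact fun u v h => hA.1 _ _ h
    · exact fun u v h => hA.2 _ _ h
    · exact fun x y z hxy hyz => hS.trans_on hA x.2 y.2 z.2 hxy hyz
  · refine csSup_le' ?_
    rintro n ⟨W, ⟨A, hA, hT⟩, rfl⟩
    let e : V → ℕ := fun v => Fintype.equivFin V v
    have he : Function.Injective e := Fin.val_injective.comp (Fintype.equivFin V).injective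
    refine (ncard_le_gp (extendOut_inGenPos (G := G) (e := e) hT)).trans ?_
    refine le_csSup ⟨Fintype.card V, ?_⟩ ⟨_, extendOut_isOrientation hA he, rfl⟩
    rintro n ⟨B, -, rfl⟩
    exact gp_le_card B
end
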